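/- arXiv:1610.09859 — 7 statements merged into one kernel-verified Lean document; each statement's English description precedes it below -/
import Mathlib

section
/- For every integer j ≥ 1 and every x ∈ [−1,1], one has j(1 − x²) ≥ P_{2j−2}(x) − x·P_{2j−1}(x). -/
/-!
Put `n = 2j - 1`. The identity `(1 - x²) Pₙ' = n (Pₙ₋₁ - x Pₙ)` turns the claim into the bound
`Pₙ'(x) ≤ n(n+1)/2` on `[-1,1]`, whose right side is `Pₙ'(1)` (`legPoly_deriv_le`).

The function `y = Pₙ'` satisfies `(1 - x²) y'' - 4 x y' + λ y = 0` with `λ = n(n+1) - 2`. Hence the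
Sonin-type energy `F = λ y² + (1 - x²) y'²` has derivative `6 x y'²`, so on `[-1,1]` it is largest at
the endpoints, where it equals `λ (n(n+1)/2)²`. For `n ≥ 2`, `λ > 0` and the bound follows; for
`n = 1`, `y` is the constant `1`.

Both the identity and the differential equation are consequences of the two recurrences
`(n+1) Pₙ₊₁ = (x² - 1) Pₙ' + (n+1) x Pₙ` (`legPoly_recA`) and `Pₙ₊₁' = x Pₙ' + (n+1) Pₙ`
(`legPoly_recB`), which come from Rodrigues's formula and the Leibniz rule.
-/

/-- Legendre polynomial of degree `n` (Rodrigues's formula), as a real function. -/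
noncomputable def legendreP (n : ℕ) (x : ℝ) : ℝ :=
  (1 / ((2:ℝ)^n * n.factorial)) * iteratedDeriv n (fun y : ℝ => (y^2 - 1)^n) x

open Polynomial in
/-- The Legendre polynomial of degree `n` as a formal polynomial, by Rodrigues's formula. -/
noncomputable def legPoly (n : ℕ) : ℝ[X] :=
  C (1 / ((2:ℝ)^n * n.factorial)) * derivative^[n] ((X^2 - 1)^n)

open Polynomial in
lemma legendreP_eq_eval (n : ℕ) (x : ℝ) : legendreP n x = (legPoly n).eval x := by
  have h : (fun y : ℝ => (y^2 - 1)^n) = fun y => (((X:ℝ[X])^2 - 1)^n).eval y := by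
    ext y; simp
  have h2 : ∀ (k : ℕ) (p : ℝ[X]),
      iteratedDeriv k (fun y => p.eval y) = fun y => (derivative^[k] p).eval y := by
    intro k
    induction k with
    | zero => intro p; simp
    | succ k ih =>
      intro p
      rw [iteratedDeriv_succ, ih, Function.iterate_succ_apply']
      ext y
      simp
  rw [legendreP, legPoly, h, h2]
  simp

open Polynomial in
lemma iterate_derivative_sq_sub_one_pow_succ (m : ℕ) :
    derivative^[m+1] (((X:ℝ[X])^2 - 1)^(m+1))
      = C (2 * ((m:ℝ)+1)) * derivative^[m] (X * (X^2 - 1)^m) := by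
  rw [Function.iterate_succ_apply, ← iterate_derivative_C_mul]
  congr 1
  rw [derivative_pow]
  have h2 : (C 2 : ℝ[X]) = 2 := rfl
  simp [h2]
  ring

open Polynomial in
lemma iterate_derivative_X_mul_succ (m : ℕ) (p : ℝ[X]) :
    derivative^[m+1] (X * p)
      = X * derivative (derivative^[m] p) + C ((m:ℝ)+1) * derivative^[m] p := by
  induction m with
  | zero => simp; ring
  | succ m ih =>
    rw [Function.iterate_succ_apply', ih, Function.iterate_succ_apply']
    simp
    ring

open Polynomial in
lemma legPoly_const_succ (m : ℕ) :
    (1 / ((2:ℝ)^(m+1) * (m+1).factorial)) * (2 * ((m:ℝ)+1)) = 1 / ((2:ℝ)^m * m.factorial) := by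
  have h1 : ((m:ℝ)+1) ≠ 0 := by positivity
  have h2 : (m.factorial:ℝ) ≠ 0 := by positivity
  rw [Nat.factorial_succ]
  push_cast
  field_simp
  ring

open Polynomial in
/-- The recurrence `(m+1) Pₘ₊₁ = (X² - 1) Pₘ' + (m+1) X Pₘ`. It compares the two expansions of the
`(m+1)`-st derivative of `(X² - 1)^(m+1)`, as the product `(X² - 1) · (X² - 1)^m` and as the `m`-th
derivative of `2(m+1) X (X² - 1)^m`. -/
lemma legPoly_recA (m : ℕ) :
    C ((m:ℝ)+1) * legPoly (m+1)
      = (X^2 - 1) * derivative (legPoly m) + C ((m:ℝ)+1) * X * legPoly m := by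
  set u : ℝ[X] := (X^2 - 1)^m with hu
  have h1 := iterate_derivative_sq_sub_one_pow_succ m
  have h2 : derivative^[m+1] (((X:ℝ[X])^2 - 1)^(m+1))
      = X * (X * derivative (derivative^[m] u) + C ((m:ℝ)+1) * derivative^[m] u)
        + C ((m:ℝ)+1) * derivative^[m] (X * u) - derivative (derivative^[m] u) := by
    have : ((X:ℝ[X])^2 - 1)^(m+1) = X * (X * u) - u := by rw [hu]; ring
    rw [this, iterate_derivative_sub, iterate_derivative_X_mul_succ,
      ← Function.iterate_succ_apply' derivative m (X * u), iterate_derivative_X_mul_succ,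
      Function.iterate_succ_apply']
  rw [← hu] at h1
  have hC : (C (2 * ((m:ℝ)+1)) : ℝ[X]) = 2 * C ((m:ℝ)+1) := by
    rw [C_mul]; rfl
  have hL : legPoly (m+1)
      = C (1 / ((2:ℝ)^m * m.factorial)) * derivative^[m] (X * u) := by
    rw [legPoly, h1, ← mul_assoc, ← C_mul, legPoly_const_succ]
  rw [hL, legPoly, derivative_C_mul, ← hu]
  rw [hC] at h1
  linear_combination (C (1 / ((2:ℝ)^m * m.factorial))) * (h2 - h1)

open Polynomial in
lemma legPoly_recB (m : ℕ) :
    derivative (legPoly (m+1)) = X * derivative (legPoly m) + C ((m:ℝ)+1) * legPoly m := by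
  rw [legPoly, iterate_derivative_sq_sub_one_pow_succ, ← mul_assoc, ← C_mul, legPoly_const_succ,
    derivative_C_mul, ← Function.iterate_succ_apply' derivative m, iterate_derivative_X_mul_succ,
    legPoly, derivative_C_mul]
  ring

lemma legPoly_zero : legPoly 0 = 1 := by simp [legPoly]

open Polynomial in
lemma legPoly_eval_one (n : ℕ) : (legPoly n).eval 1 = 1 := by
  induction n with
  | zero => simp [legPoly_zero]
  | succ m ih =>
    have h := congrArg (eval 1) (legPoly_recA m)
    have h1 : ((m:ℝ)+1) ≠ 0 := by positivity
    simp [ih] at h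
    exact (mul_eq_left₀ h1).mp h

open Polynomial in
lemma legPoly_eval_neg_one_sq (n : ℕ) : (legPoly n).eval (-1) ^ 2 = 1 := by
  induction n with
  | zero => simp [legPoly_zero]
  | succ m ih =>
    have h := congrArg (eval (-1)) (legPoly_recA m)
    have h1 : ((m:ℝ)+1) ≠ 0 := by positivity
    simp at h
    have h2 : (legPoly (m+1)).eval (-1) = - (legPoly m).eval (-1) := by
      apply mul_left_cancel₀ h1
      linarith
    rw [h2, neg_sq, ih]

open Polynomial in
lemma legPoly_first_order (m : ℕ) :
    (1 - X^2) * derivative (legPoly (m+1))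
      = C ((m:ℝ)+1) * (legPoly m - X * legPoly (m+1)) := by
  linear_combination (1 - X^2) * legPoly_recB m + X * legPoly_recA m

open Polynomial in
lemma legPoly_ode (m : ℕ) :
    (1 - X^2) * derivative (derivative (legPoly (m+1))) - 2 * X * derivative (legPoly (m+1))
      + C (((m:ℝ)+1) * (m+2)) * legPoly (m+1) = 0 := by
  have h := congrArg derivative (legPoly_first_order m)
  simp only [derivative_mul, derivative_sub, derivative_C, derivative_X, derivative_one,
    derivative_X_pow] at h
  simp only [map_add, map_mul, C_1, map_natCast, map_ofNat] at h ⊢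
  have hA := legPoly_recA m
  have hB := legPoly_recB m
  simp only [map_add, C_1, map_natCast] at hA hB
  push_cast at h
  simp only [pow_one] at h
  linear_combination h + ((m:ℝ[X]) + 1) * (hA - X * hB)

open Polynomial in
lemma legPoly_deriv_ode (m : ℕ) :
    (1 - X^2) * derivative (derivative (derivative (legPoly (m+1))))
      - 4 * X * derivative (derivative (legPoly (m+1)))
      + C (((m:ℝ)+1) * (m+2) - 2) * derivative (legPoly (m+1)) = 0 := by
  have h := congrArg derivative (legPoly_ode m)
  simp only [derivative_mul, derivative_sub, derivative_add, derivative_C, derivative_X,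
    derivative_one, derivative_X_pow, derivative_ofNat, derivative_zero] at h
  simp only [map_add, map_sub, map_mul, C_1, map_natCast, map_ofNat] at h ⊢
  push_cast at h
  simp only [pow_one] at h
  linear_combination h

open Polynomial in
/-- The energy `F = λ y² + (1 - X²) y'²` of `y = Pₘ₊₁'`, where `λ = (m+1)(m+2) - 2`. -/
noncomputable def legEnergy (m : ℕ) : ℝ[X] :=
  C (((m:ℝ)+1) * (m+2) - 2) * derivative (legPoly (m+1)) ^ 2
    + (1 - X^2) * derivative (derivative (legPoly (m+1))) ^ 2

open Polynomial in
lemma legEnergy_derivative (m : ℕ) :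
    derivative (legEnergy m) = 6 * X * derivative (derivative (legPoly (m+1))) ^ 2 := by
  have h := legPoly_deriv_ode m
  rw [legEnergy]
  simp only [derivative_mul, derivative_sub, derivative_add, derivative_C, derivative_pow,
    derivative_one, derivative_X]
  simp only [map_natCast, map_sub, map_add, map_mul, C_1, map_ofNat] at h ⊢
  push_cast
  simp only [pow_one]
  linear_combination 2 * derivative (derivative (legPoly (m+1))) * h

open Polynomial in
/-- At an endpoint `s = ±1` the energy is `λ (n(n+1)/2)²` with `n = m + 1`, since the differential
equation degenerates there to `2 s Pₙ'(s) = n(n+1) Pₙ(s)`. -/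
lemma legEnergy_endpoint (m : ℕ) (s : ℝ) (hs : s ^ 2 = 1)
    (hP : (legPoly (m+1)).eval s ^ 2 = 1) :
    (legEnergy m).eval s = (((m:ℝ)+1) * (m+2) - 2) * (((m:ℝ)+1) * (m+2) / 2) ^ 2 := by
  have h := congrArg (eval s) (legPoly_ode m)
  simp only [eval_add, eval_sub, eval_mul, eval_pow, eval_X, eval_one, eval_C, eval_ofNat,
    eval_zero, hs] at h
  have h2 : (derivative (legPoly (m+1))).eval s ^ 2 = (((m:ℝ)+1) * (m+2) / 2) ^ 2 := by
    have h3 : 2 * s * (derivative (legPoly (m+1))).eval s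
        = ((m:ℝ)+1) * (m+2) * (legPoly (m+1)).eval s := by linarith
    have h4 := congrArg (· ^ 2) h3
    simp only [mul_pow, hs, hP] at h4
    linear_combination h4 / 4
  rw [legEnergy]
  simp only [eval_add, eval_sub, eval_mul, eval_pow, eval_X, eval_one, eval_C, hs, h2]
  ring

open Polynomial in
lemma legEnergy_le (m : ℕ) (x : ℝ) (hx : x ∈ Set.Icc (-1:ℝ) 1) :
    (legEnergy m).eval x ≤ (((m:ℝ)+1) * (m+2) - 2) * (((m:ℝ)+1) * (m+2) / 2) ^ 2 := by
  have hd : ∀ y : ℝ, deriv (fun z => (legEnergy m).eval z) y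
      = 6 * y * ((derivative (derivative (legPoly (m+1)))).eval y) ^ 2 := by
    intro y
    rw [Polynomial.deriv, legEnergy_derivative]
    simp
  rcases le_total 0 x with h0 | h0
  · rw [← legEnergy_endpoint m 1 (by norm_num) (by rw [legPoly_eval_one]; norm_num)]
    refine monotoneOn_of_deriv_nonneg (f := fun z => (legEnergy m).eval z) (convex_Icc 0 1)
      (legEnergy m).continuous.continuousOn (legEnergy m).differentiable.differentiableOn
      ?_ ⟨h0, hx.2⟩ ⟨zero_le_one, le_rfl⟩ hx.2
    intro y hy
    rw [interior_Icc] at hy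
    rw [hd]
    have := hy.1
    positivity
  · rw [← legEnergy_endpoint m (-1) (by norm_num) (legPoly_eval_neg_one_sq _)]
    refine antitoneOn_of_deriv_nonpos (f := fun z => (legEnergy m).eval z) (convex_Icc (-1) 0)
      (legEnergy m).continuous.continuousOn (legEnergy m).differentiable.differentiableOn
      ?_ ⟨le_rfl, by norm_num⟩ ⟨hx.1, h0⟩ hx.1
    intro y hy
    rw [interior_Icc] at hy
    rw [hd]
    exact mul_nonpos_of_nonpos_of_nonneg (by linarith [hy.2]) (sq_nonneg _)

open Polynomial in
lemma legPoly_deriv_le (m : ℕ) (x : ℝ) (hx : x ∈ Set.Icc (-1:ℝ) 1) :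
    (derivative (legPoly (m+1))).eval x ≤ ((m:ℝ)+1) * (m+2) / 2 := by
  rcases Nat.eq_zero_or_pos m with rfl | hm
  · rw [legPoly_recB, legPoly_zero]
    simp
  · have hm' : (1:ℝ) ≤ m := by exact_mod_cast hm
    have hl : 0 < ((m:ℝ)+1) * (m+2) - 2 := by nlinarith
    have h := legEnergy_le m x hx
    rw [legEnergy] at h
    simp only [eval_add, eval_sub, eval_mul, eval_pow, eval_X, eval_one, eval_C] at h
    have h1 : 0 ≤ (1 - x^2) * ((derivative (derivative (legPoly (m+1)))).eval x) ^ 2 :=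
      mul_nonneg (by nlinarith [hx.1, hx.2]) (sq_nonneg _)
    exact le_of_sq_le_sq (le_of_mul_le_mul_left (by linarith) hl) (by positivity)

/-- For `j ≥ 1` and `x ∈ [-1,1]`, `j(1 - x²) ≥ P_{2j-2}(x) - x·P_{2j-1}(x)`. -/
theorem legendreP_ineq (j : ℕ) (hj : 1 ≤ j) (x : ℝ) (hx : x ∈ Set.Icc (-1:ℝ) 1) :
    (j:ℝ) * (1 - x^2) ≥ legendreP (2*j - 2) x - x * legendreP (2*j - 1) x := by
  obtain ⟨k, rfl⟩ : ∃ k, j = k + 1 := ⟨j - 1, by omega⟩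
  have e1 : 2 * (k+1) - 2 = 2 * k := by omega
  have e2 : 2 * (k+1) - 1 = 2 * k + 1 := by omega
  rw [e1, e2, legendreP_eq_eval, legendreP_eq_eval]
  have h := congrArg (Polynomial.eval x) (legPoly_first_order (2 * k))
  have hb := legPoly_deriv_le (2 * k) x hx
  simp only [Polynomial.eval_sub, Polynomial.eval_mul, Polynomial.eval_pow, Polynomial.eval_X,
    Polynomial.eval_one, Polynomial.eval_C] at h
  push_cast at h hb ⊢
  have hw : 0 ≤ 1 - x^2 := by nlinarith [hx.1, hx.2]
  have hk : (0:ℝ) < 2 * k + 1 := by positivity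
  refine le_of_mul_le_mul_left ?_ hk
  rw [← h]
  nlinarith [mul_le_mul_of_nonneg_left hb hw]
end

section
/- For every integer j ≥ 1, the limit of (P_{2j−2}(x) − x·P_{2j−1}(x))/(1 − x²) as x → 1 from the left equals j, and the limit as x → −1 from the right also equals j. -/
/-!
With `n = 2j - 1`, the numerator `f x = P_{n-1}(x) - x P_n(x)` is a polynomial which vanishes at `1`,
so the limit at `1` is `-f'(1) / 2`. Expanding `(y² - 1)^n = t^n (t + 2)^n` in `t = y - 1` and reading
off the coefficients of `t^n` and `t^(n+1)` gives `P_n(1) = 1` and `P_n'(1) = n(n+1)/2`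
(`legendreP_one`, `hasDerivAt_legendreP_one`), hence `f'(1) = -(n+1) = -2j` and the limit is `j`.
Since `P_m(-x) = (-1)^m P_m(x)` (`legendreP_neg`) and `n` is odd, the quotient is an even function of
`x`, which reduces the limit at `-1` to the limit at `1`.
-/

open Filter

open Polynomial in
lemma iteratedDeriv_eval_polynomial (p : ℝ[X]) (k : ℕ) :
    iteratedDeriv k (fun y : ℝ => p.eval y) = fun y => (derivative^[k] p).eval y := by
  induction k with
  | zero => simp
  | succ k ih =>
    rw [iteratedDeriv_succ, ih]
    ext y
    rw [Polynomial.deriv, Function.iterate_succ_apply']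

open Polynomial in
/-- Rodrigues's formula with the derivative taken algebraically. -/
lemma legendreP_eq_eval_s3 (n : ℕ) (x : ℝ) : legendreP n x =
    (1 / ((2:ℝ)^n * n.factorial)) * (derivative^[n] ((X ^ 2 - 1 : ℝ[X]) ^ n)).eval x := by
  unfold legendreP
  have h := iteratedDeriv_eval_polynomial ((X ^ 2 - 1 : ℝ[X]) ^ n) n
  simp only [eval_pow, eval_sub, eval_X, eval_one] at h
  rw [h]

open Polynomial in
/-- Taylor's formula at `1`: in the variable `t = y - 1` the polynomial `(y² - 1)^n` is
`(t + 2)^n * t^n`. -/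
lemma eval_one_iterate_derivative (n k : ℕ) :
    (derivative^[n + k] ((X ^ 2 - 1 : ℝ[X]) ^ n)).eval 1 =
      (n + k).factorial * ((X + C 2 : ℝ[X]) ^ n).coeff k := by
  have ht : taylor 1 ((X ^ 2 - 1 : ℝ[X]) ^ n) = (X + C 2) ^ n * X ^ n := by
    rw [taylor_apply, ← mul_pow]
    simp only [pow_comp, sub_comp, X_comp, one_comp]
    congr 1
    have h2 : (C 2 : ℝ[X]) = 2 := rfl
    rw [h2, C_1]
    ring
  rw [← factorial_smul_hasseDeriv]
  rw [LinearMap.smul_apply, eval_smul, nsmul_eq_mul]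
  rw [← taylor_coeff, ht, add_comm n k, coeff_mul_X_pow]

lemma legendreP_one (n : ℕ) : legendreP n 1 = 1 := by
  have h := eval_one_iterate_derivative n 0
  rw [add_zero] at h
  rw [legendreP_eq_eval_s3, h, Polynomial.coeff_X_add_C_pow]
  have := n.factorial_ne_zero
  simp
  field_simp

lemma hasDerivAt_legendreP_one (n : ℕ) :
    HasDerivAt (legendreP n) ((n:ℝ) * (n + 1) / 2) 1 := by
  have h := eval_one_iterate_derivative n 1
  rw [Polynomial.coeff_X_add_C_pow, Function.iterate_succ_apply'] at h
  have hd := ((Polynomial.derivative^[n] ((Polynomial.X ^ 2 - 1 : Polynomial ℝ) ^ n)).hasDerivAt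
    1).const_mul (1 / ((2:ℝ)^n * n.factorial))
  rw [h] at hd
  have hf : legendreP n = _ := funext (legendreP_eq_eval_s3 n)
  rw [hf]
  refine hd.congr_deriv ?_
  have := n.factorial_ne_zero
  rcases n with _ | m
  · simp
  · rw [Nat.factorial_succ (m + 1)]
    simp only [Nat.choose_one_right, Nat.add_sub_cancel]
    push_cast
    field_simp
    ring

lemma legendreP_neg (n : ℕ) (x : ℝ) : legendreP n (-x) = (-1) ^ n * legendreP n x := by
  unfold legendreP
  have h := iteratedDeriv_comp_neg n (fun y : ℝ => (y^2 - 1)^n) (-x)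
  simp only [neg_sq, neg_neg, smul_eq_mul] at h
  rw [h]
  ring

/-- The limit of the quotient at `1`, as minus half the derivative of its numerator there. -/
lemma tendsto_legendreP_quotient_one (n : ℕ) :
    Tendsto (fun x : ℝ => (legendreP n x - x * legendreP (n + 1) x) / (1 - x^2))
      (nhdsWithin (1:ℝ) (Set.Iio 1)) (nhds (((n:ℝ) + 2) / 2)) := by
  have hd := (hasDerivAt_legendreP_one n).sub
    ((hasDerivAt_id (1:ℝ)).mul (hasDerivAt_legendreP_one (n + 1)))
  have hs := (hasDerivAt_iff_tendsto_slope.1 hd).mono_left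
    (nhdsLT_le_nhdsNE (1:ℝ))
  have hg : Tendsto (fun x : ℝ => -(1 + x)⁻¹) (nhdsWithin (1:ℝ) (Set.Iio 1))
      (nhds (-(1 + 1)⁻¹)) := by
    apply Tendsto.mono_left _ nhdsWithin_le_nhds
    have : ContinuousAt (fun x : ℝ => -(1 + x)⁻¹) 1 := by
      fun_prop (disch := norm_num)
    exact this
  have hm := hs.mul hg
  convert hm.congr' ?_ using 2
  · simp only [legendreP_one, id]
    push_cast
    ring
  · filter_upwards [self_mem_nhdsWithin] with x hx
    simp only [slope_def_field, Pi.sub_apply, Pi.mul_apply, id, legendreP_one]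
    -- Where `1 + x = 0` both sides vanish by the convention for division by zero.
    rw [show (1:ℝ) - x ^ 2 = -((x - 1) * (1 + x)) by ring, div_neg, ← div_div]
    ring

/-- The limit of `(P_{2j-2}(x) - x·P_{2j-1}(x))/(1 - x²)` as `x → 1⁻` equals `j`,
and the limit as `x → -1⁺` also equals `j`. -/
theorem legendreP_limit (j : ℕ) (hj : 1 ≤ j) :
    Tendsto (fun x : ℝ => (legendreP (2*j - 2) x - x * legendreP (2*j - 1) x) / (1 - x^2))
      (nhdsWithin (1:ℝ) (Set.Iio 1)) (nhds (j:ℝ)) ∧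
    Tendsto (fun x : ℝ => (legendreP (2*j - 2) x - x * legendreP (2*j - 1) x) / (1 - x^2))
      (nhdsWithin (-1:ℝ) (Set.Ioi (-1))) (nhds (j:ℝ)) := by
  obtain ⟨i, rfl⟩ : ∃ i, j = i + 1 := ⟨j - 1, by omega⟩
  rw [show 2 * (i + 1) - 2 = 2 * i by omega, show 2 * (i + 1) - 1 = 2 * i + 1 by omega]
  have h1 := tendsto_legendreP_quotient_one (2 * i)
  rw [show (((2 * i : ℕ) : ℝ) + 2) / 2 = ((i + 1 : ℕ) : ℝ) by push_cast; ring] at h1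
  refine ⟨h1, ?_⟩
  have hneg : Tendsto (fun x : ℝ => -x) (nhdsWithin (-1:ℝ) (Set.Ioi (-1)))
      (nhdsWithin (1:ℝ) (Set.Iio 1)) := by
    simpa using tendsto_neg_nhdsGT (a := (-1:ℝ))
  refine (h1.comp hneg).congr fun x => ?_
  simp only [Function.comp_apply, legendreP_neg, pow_succ, pow_mul]
  ring
end

section
/- For every natural number n, the following explicit formulas hold: P(0,n) = 2/(2n+1); P(1,n) = 2(2n² + 2n − 1)/((2n−1)(2n+1)(2n+3)); P(2,n) = (11n⁴ + 22n³ − 31n² − 42n + 18)/((2n−3)(2n−1)(2n+1)(2n+3)(2n+5)); and P(3,n) = (34n⁶ + 102n⁵ − 305n⁴ − 780n³ + 703n² + 1110n − 450)/((2n−5)(2n−3)(2n−1)(2n+1)(2n+3)(2n+5)(2n+7)). -/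
/-- `P(m,n) = ∫_{-1}^{1} P_m(x)² P_n(x)² dx`. -/
noncomputable def legP (m n : ℕ) : ℝ :=
  ∫ x in (-1:ℝ)..1, (legendreP m x)^2 * (legendreP n x)^2

open Polynomial in
/-- The Legendre polynomial of degree `n`, as an element of `ℝ[X]`. -/
noncomputable def legendrePoly (n : ℕ) : ℝ[X] :=
  C (1 / ((2:ℝ)^n * n.factorial)) * derivative^[n] ((X^2 - 1)^n)

namespace LegendreMoments

open Polynomial

/-! ### Legendre polynomials and integration in `ℝ[X]` -/

lemma iteratedDeriv_eval (q : ℝ[X]) (k : ℕ) :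
    iteratedDeriv k (fun x => q.eval x) = fun x => (derivative^[k] q).eval x := by
  induction k with
  | zero => simp
  | succ k ih =>
    rw [iteratedDeriv_succ, ih]
    funext x
    rw [Polynomial.deriv, Function.iterate_succ_apply']

lemma legendreP_eq (n : ℕ) (x : ℝ) : legendreP n x = (legendrePoly n).eval x := by
  have h := iteratedDeriv_eval ((X^2 - 1)^n) n
  have h' : (fun y : ℝ => (y^2 - 1)^n) = fun y => ((X^2 - 1 : ℝ[X])^n).eval y := by
    funext y; simp
  rw [legendreP, legendrePoly, h', h]
  simp

/-- Integration over `[-1, 1]`, as a linear functional on polynomials. -/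
noncomputable def integ : ℝ[X] →ₗ[ℝ] ℝ where
  toFun q := ∫ x in (-1:ℝ)..1, q.eval x
  map_add' p q := by
    simp only [eval_add]
    exact intervalIntegral.integral_add (p.continuous.intervalIntegrable _ _)
      (q.continuous.intervalIntegrable _ _)
  map_smul' c q := by simp

lemma integ_derivative (q : ℝ[X]) : integ (derivative q) = q.eval 1 - q.eval (-1) :=
  intervalIntegral.integral_eq_sub_of_hasDerivAt (fun x _ => q.hasDerivAt x)
    ((derivative q).continuous.intervalIntegrable _ _)

lemma integ_C_mul (c : ℝ) (q : ℝ[X]) : integ (C c * q) = c * integ q := by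
  rw [← smul_eq_C_mul, map_smul, smul_eq_mul]

/-! ### Legendre's equation, degree and boundary values -/

/-- The equation satisfied by the `k`-th derivative of `u = (x² - 1)^n`. It becomes Legendre's
equation when `k = n`. -/
lemma ode_aux (n k : ℕ) :
    (X^2 - 1) * derivative^[k+2] ((X^2 - 1 : ℝ[X])^n)
      + 2 * ((k:ℝ[X]) + 1 - (n:ℝ[X])) * X * derivative^[k+1] ((X^2 - 1 : ℝ[X])^n)
      + (((k:ℝ[X]) + 1) * (k:ℝ[X]) - 2 * (n:ℝ[X]) * ((k:ℝ[X]) + 1)) * derivative^[k] ((X^2 - 1 : ℝ[X])^n) = 0 := by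
  induction k with
  | zero =>
    have h : (X^2 - 1) * derivative ((X^2 - 1 : ℝ[X])^n) = 2 * (n:ℝ[X]) * X * (X^2 - 1 : ℝ[X])^n := by
      cases n with
      | zero => simp
      | succ m =>
        simp only [derivative_pow, derivative_sub, derivative_X, derivative_one]
        simp
        rw [map_ofNat]
        ring
    have h2 := congrArg derivative h
    simp only [derivative_mul, derivative_sub, derivative_X_sq, derivative_one, derivative_natCast,
      derivative_X, derivative_ofNat] at h2
    simp only [Function.iterate_succ_apply', Function.iterate_zero, id, Nat.cast_zero, zero_add]
    rw [map_ofNat] at h2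
    linear_combination h2
  | succ k ih =>
    have h2 := congrArg derivative ih
    simp only [derivative_mul, derivative_add, derivative_sub, derivative_X_sq, derivative_one,
      derivative_natCast, derivative_X, derivative_ofNat, derivative_zero,
      ← Function.iterate_succ_apply' derivative, map_ofNat] at h2
    push_cast
    linear_combination h2

lemma legendrePoly_ode (n : ℕ) :
    (1 - X^2) * derivative (derivative (legendrePoly n))
      - 2 * X * derivative (legendrePoly n) + C ((n:ℝ) * (n + 1)) * legendrePoly n = 0 := by
  have h := ode_aux n n
  simp only [Function.iterate_succ_apply'] at h
  simp only [legendrePoly, derivative_C_mul, map_mul, map_add, map_natCast, map_one]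
  linear_combination (-C (1 / ((2:ℝ)^n * n.factorial))) * h

lemma natDegree_legendrePoly_le (n : ℕ) : (legendrePoly n).natDegree ≤ n := by
  refine (natDegree_C_mul_le _ _).trans ((natDegree_iterate_derivative _ _).trans ?_)
  have : ((X^2 - 1 : ℝ[X])^n).natDegree ≤ n * 2 :=
    natDegree_pow_le_of_le n (by compute_degree)
  omega

/-- The value at `1`: only the term in which all `n` derivatives fall on `(x - 1)^n` survives. -/
lemma eval_one (n : ℕ) : (legendrePoly n).eval 1 = 1 := by
  have h := aeval_iterate_derivative_self ((X^2 - 1 : ℝ[X])^n) n (1:ℝ) (p' := (X + 1)^n)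
    (by simp only [map_one, Algebra.algebraMap_self, Polynomial.map_id]; rw [← mul_pow]; congr 1; ring)
  simp at h
  have : (n.factorial : ℝ) ≠ 0 := by positivity
  simp [legendrePoly, h]
  norm_num
  field_simp

lemma eval_neg_one_sq (n : ℕ) : (legendrePoly n).eval (-1) ^ 2 = 1 := by
  have h := aeval_iterate_derivative_self ((X^2 - 1 : ℝ[X])^n) n (-1:ℝ) (p' := (X - 1)^n)
    (by simp only [map_neg, map_one, Algebra.algebraMap_self, Polynomial.map_id]
        rw [← mul_pow]; congr 1; ring)
  simp at h
  have : (n.factorial : ℝ) ≠ 0 := by positivity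
  have h2 : ((-1 - 1 : ℝ)^n)^2 = (2^n)^2 := by
    rw [← pow_mul, ← pow_mul, mul_comm, pow_mul, pow_mul]; norm_num
  simp [legendrePoly, h, mul_pow]
  rw [h2]
  field_simp

/-! ### Orthogonality and the norm -/

/-- Orthogonality to monomials of lower degree. By self-adjointness,
`(λ_n - λ_k) ∫ x^k y = -k (k-1) ∫ x^(k-2) y` with `λ_k = k (k+1)`. -/
lemma integ_X_pow_mul (n k : ℕ) (hk : k < n) : integ (X^k * legendrePoly n) = 0 := by
  induction k using Nat.strong_induction_on with
  | _ k ih =>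
    set y := legendrePoly n with hy
    have ode : (1 - X^2) * derivative (derivative y) - 2 * X * derivative y
      + C ((n:ℝ) * (n + 1)) * y = 0 := legendrePoly_ode n
    have hb : integ (derivative ((1 - X^2) * (X^k * derivative y - derivative (X^k) * y))) = 0 := by
      rw [integ_derivative]; simp
    have hkey : derivative ((1 - X^2) * (X^k * derivative y - derivative (X^k) * y))
        = C ((k:ℝ) * (k + 1) - n * (n + 1)) * (X^k * y)
          - C ((k:ℝ) * (k - 1)) * (X^(k-2) * y) := by
      rcases k with _ | _ | k
      · simp only [pow_zero, derivative_mul, derivative_one, derivative_X_sq,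
          Nat.cast_zero, map_sub, map_mul, map_add, map_natCast, map_one, map_ofNat,
          map_zero] at ode ⊢
        linear_combination ode
      · simp only [zero_add, pow_one, derivative_mul, derivative_one,
          derivative_X_sq, derivative_X,
          Nat.cast_one, map_sub, map_mul, map_add, map_natCast, map_one, map_ofNat] at ode ⊢
        linear_combination X * ode
      · simp only [derivative_mul, derivative_one, derivative_X_pow,
          map_sub, map_mul, map_add, map_natCast, map_one, Nat.add_sub_cancel, Nat.cast_add, Nat.cast_one,
          show k + 1 + 1 - 1 = k + 1 from rfl, show k + 1 + 1 - 2 = k from rfl,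
          derivative_natCast] at ode ⊢
        linear_combination X^(k+2) * ode
    have hlow : ((k:ℝ) * (k - 1)) * integ (X^(k-2) * y) = 0 := by
      rcases k with _ | _ | k
      · simp
      · simp
      · rw [ih (k + 1 + 1 - 2) (by omega) (by omega), mul_zero]
    rw [hkey, map_sub, integ_C_mul, integ_C_mul, hlow, sub_zero] at hb
    refine (mul_eq_zero.mp hb).resolve_left ?_
    have : (k:ℝ) < n := by exact_mod_cast hk
    have : (0:ℝ) ≤ k := by positivity
    nlinarith

lemma integ_mul_of_coeff (n : ℕ) (q : ℝ[X]) (hq : ∀ k, n ≤ k → q.coeff k = 0) :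
    integ (q * legendrePoly n) = 0 := by
  rw [q.as_sum_support_C_mul_X_pow, Finset.sum_mul, map_sum]
  refine Finset.sum_eq_zero fun k hk => ?_
  rw [mul_assoc, integ_C_mul, integ_X_pow_mul, mul_zero]
  by_contra h
  exact (mem_support_iff.mp hk) (hq k (by omega))

lemma moment_zero (n : ℕ) : (2 * (n:ℝ) + 1) * integ (legendrePoly n ^ 2) = 2 := by
  set y := legendrePoly n with hy
  have h1 : integ ((X * derivative y - C (n:ℝ) * y) * y) = 0 := by
    apply integ_mul_of_coeff
    intro k hk
    rcases k with _ | k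
    · obtain rfl : n = 0 := by omega
      simp
    · rw [coeff_sub, coeff_X_mul, coeff_C_mul, coeff_derivative]
      -- The coefficient is `(k + 1 - n)` times that of `y`, which is zero beyond degree `n`.
      rcases hk.eq_or_lt with h | h
      · rw [h]; push_cast; ring
      · rw [coeff_eq_zero_of_natDegree_lt (p := y)
          ((natDegree_legendrePoly_le n).trans_lt h)]
        ring
  have h2 : integ (derivative (X * y^2)) = 2 := by
    rw [integ_derivative]
    have e1 : y.eval 1 = 1 := eval_one n
    have e2 : y.eval (-1) ^ 2 = 1 := eval_neg_one_sq n
    simp only [eval_mul, eval_pow, eval_X, e1, e2]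
    norm_num
  have h3 : derivative (X * y^2)
      = C (2 * (n:ℝ) + 1) * y^2 + C 2 * ((X * derivative y - C (n:ℝ) * y) * y) := by
    simp only [derivative_mul, derivative_X, derivative_sq, map_add, map_mul, map_one, map_ofNat]
    ring
  rw [h3, map_add, integ_C_mul, integ_C_mul, h1, mul_zero, add_zero] at h2
  exact h2

/-! ### Recurrences for the moments -/

/-- The case `j = 0` of the primitive described above, with `(x^j p)' / 2 = -x`. -/
lemma moment_one (n : ℕ) :
    (2 * ((n:ℝ) * (n + 1)) - 1) * integ (legendrePoly n ^ 2)
      + (3 - 4 * ((n:ℝ) * (n + 1))) * integ (X^2 * legendrePoly n ^ 2) = 0 := by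
  set y := legendrePoly n with hy
  have ode : (1 - X^2) * derivative (derivative y) - 2 * X * derivative y
    + C ((n:ℝ) * (n + 1)) * y = 0 := legendrePoly_ode n
  have hb : integ (derivative ((1 - X^2) *
      (X^1 * ((1 - X^2) * derivative y ^ 2 + C ((n:ℝ) * (n + 1)) * y^2)
        - C 1 * (X^0 * (1 - X^2) * y * derivative y - (-X) * y^2)))) = 0 := by
    rw [integ_derivative]; simp
  have hkey : derivative ((1 - X^2) *
      (X^1 * ((1 - X^2) * derivative y ^ 2 + C ((n:ℝ) * (n + 1)) * y^2)
        - C 1 * (X^0 * (1 - X^2) * y * derivative y - (-X) * y^2)))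
      = C (2 * ((n:ℝ) * (n + 1)) - 1) * (y ^ 2)
        + C (3 - 4 * ((n:ℝ) * (n + 1))) * (X^2 * y ^ 2) := by
    simp only [derivative_mul, derivative_one, derivative_sq,
      derivative_X_pow, derivative_X, derivative_ofNat,
      map_sub, map_mul, map_add, map_natCast, map_one, map_ofNat, map_neg] at ode ⊢
    norm_num at ode ⊢
    linear_combination (2 * X^1 * (1 - X^2) * derivative y - 1 * X^0 * (1 - X^2) * y) * ode
  rw [hkey] at hb
  simpa only [map_add, integ_C_mul] using hb

/-- The case `j = 2` of the primitive described above, with `(x^j p)' / 2 = x - 2 x^3`. -/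
lemma moment_two (n : ℕ) :
    3 * integ (legendrePoly n ^ 2)
      + (6 * ((n:ℝ) * (n + 1)) - 27) * integ (X^2 * legendrePoly n ^ 2)
      + (30 - 8 * ((n:ℝ) * (n + 1))) * integ (X^4 * legendrePoly n ^ 2) = 0 := by
  set y := legendrePoly n with hy
  have ode : (1 - X^2) * derivative (derivative y) - 2 * X * derivative y
    + C ((n:ℝ) * (n + 1)) * y = 0 := legendrePoly_ode n
  have hb : integ (derivative ((1 - X^2) *
      (X^3 * ((1 - X^2) * derivative y ^ 2 + C ((n:ℝ) * (n + 1)) * y^2)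
        - C 3 * (X^2 * (1 - X^2) * y * derivative y - (X - 2 * X^3) * y^2)))) = 0 := by
    rw [integ_derivative]; simp
  have hkey : derivative ((1 - X^2) *
      (X^3 * ((1 - X^2) * derivative y ^ 2 + C ((n:ℝ) * (n + 1)) * y^2)
        - C 3 * (X^2 * (1 - X^2) * y * derivative y - (X - 2 * X^3) * y^2)))
      = C (3) * (y ^ 2)
        + C (6 * ((n:ℝ) * (n + 1)) - 27) * (X^2 * y ^ 2)
        + C (30 - 8 * ((n:ℝ) * (n + 1))) * (X^4 * y ^ 2) := by
    simp only [derivative_mul, derivative_one, derivative_sq,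
      derivative_X_pow, derivative_X, derivative_ofNat,
      map_sub, map_mul, map_add, map_natCast, map_one, map_ofNat, map_neg] at ode ⊢
    norm_num at ode ⊢
    linear_combination (2 * X^3 * (1 - X^2) * derivative y - 3 * X^2 * (1 - X^2) * y) * ode
  rw [hkey] at hb
  simpa only [map_add, integ_C_mul] using hb

/-- The case `j = 4` of the primitive described above, with `(x^j p)' / 2 = 2 x^3 - 3 x^5`. -/
lemma moment_three (n : ℕ) :
    30 * integ (X^2 * legendrePoly n ^ 2)
      + (10 * ((n:ℝ) * (n + 1)) - 125) * integ (X^4 * legendrePoly n ^ 2)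
      + (105 - 12 * ((n:ℝ) * (n + 1))) * integ (X^6 * legendrePoly n ^ 2) = 0 := by
  set y := legendrePoly n with hy
  have ode : (1 - X^2) * derivative (derivative y) - 2 * X * derivative y
    + C ((n:ℝ) * (n + 1)) * y = 0 := legendrePoly_ode n
  have hb : integ (derivative ((1 - X^2) *
      (X^5 * ((1 - X^2) * derivative y ^ 2 + C ((n:ℝ) * (n + 1)) * y^2)
        - C 5 * (X^4 * (1 - X^2) * y * derivative y - (2 * X^3 - 3 * X^5) * y^2)))) = 0 := by
    rw [integ_derivative]; simp
  have hkey : derivative ((1 - X^2) *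
      (X^5 * ((1 - X^2) * derivative y ^ 2 + C ((n:ℝ) * (n + 1)) * y^2)
        - C 5 * (X^4 * (1 - X^2) * y * derivative y - (2 * X^3 - 3 * X^5) * y^2)))
      = C (30) * (X^2 * y ^ 2)
        + C (10 * ((n:ℝ) * (n + 1)) - 125) * (X^4 * y ^ 2)
        + C (105 - 12 * ((n:ℝ) * (n + 1))) * (X^6 * y ^ 2) := by
    simp only [derivative_mul, derivative_one, derivative_sq,
      derivative_X_pow, derivative_X, derivative_ofNat,
      map_sub, map_mul, map_add, map_natCast, map_one, map_ofNat, map_neg] at ode ⊢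
    norm_num at ode ⊢
    linear_combination (2 * X^5 * (1 - X^2) * derivative y - 5 * X^4 * (1 - X^2) * y) * ode
  rw [hkey] at hb
  simpa only [map_add, integ_C_mul] using hb

/-! ### The polynomials of degree at most three -/

lemma legendrePoly_zero : legendrePoly 0 = 1 := by simp [legendrePoly]

lemma legendrePoly_one : legendrePoly 1 = X := by
  simp only [legendrePoly, Function.iterate_succ_apply', Function.iterate_zero, id, pow_one,
    derivative_sub, derivative_X_sq, derivative_one, sub_zero]
  rw [← mul_assoc, ← map_mul]
  norm_num

lemma legendrePoly_two : legendrePoly 2 = C (1/2) * (C 3 * X^2 - 1) := by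
  have h : (X^2 - 1 : ℝ[X])^2 = X^4 - C 2 * X^2 + 1 := by rw [map_ofNat]; ring
  rw [legendrePoly, h]
  apply Polynomial.funext
  intro x
  simp [Function.iterate_succ_apply', Nat.factorial]
  ring

lemma legendrePoly_three : legendrePoly 3 = C (1/2) * (C 5 * X^3 - C 3 * X) := by
  have h : (X^2 - 1 : ℝ[X])^3 = X^6 - C 3 * X^4 + C 3 * X^2 - 1 := by rw [map_ofNat]; ring
  rw [legendrePoly, h]
  apply Polynomial.funext
  intro x
  simp [Function.iterate_succ_apply', Nat.factorial]
  ring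

lemma legP_eq (m n : ℕ) : legP m n = integ (legendrePoly m ^ 2 * legendrePoly n ^ 2) := by
  simp [legP, integ, legendreP_eq]

lemma odd_ne_zero (n : ℕ) (a : ℤ) (ha : a % 2 = 1) : 2 * (n:ℝ) + a ≠ 0 := by
  have : 2 * (n:ℤ) + a ≠ 0 := by omega
  exact_mod_cast this

end LegendreMoments

open LegendreMoments Polynomial in
/-- Explicit formulas for `P(0,n)`, `P(1,n)`, `P(2,n)`, `P(3,n)`. -/
theorem legP_explicit (n : ℕ) :
    legP 0 n = 2 / (2*(n:ℝ) + 1) ∧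
    legP 1 n = 2*(2*(n:ℝ)^2 + 2*(n:ℝ) - 1) / ((2*(n:ℝ) - 1)*(2*(n:ℝ) + 1)*(2*(n:ℝ) + 3)) ∧
    legP 2 n = (11*(n:ℝ)^4 + 22*(n:ℝ)^3 - 31*(n:ℝ)^2 - 42*(n:ℝ) + 18) /
      ((2*(n:ℝ) - 3)*(2*(n:ℝ) - 1)*(2*(n:ℝ) + 1)*(2*(n:ℝ) + 3)*(2*(n:ℝ) + 5)) ∧
    legP 3 n = (34*(n:ℝ)^6 + 102*(n:ℝ)^5 - 305*(n:ℝ)^4 - 780*(n:ℝ)^3 + 703*(n:ℝ)^2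
        + 1110*(n:ℝ) - 450) /
      ((2*(n:ℝ) - 5)*(2*(n:ℝ) - 3)*(2*(n:ℝ) - 1)*(2*(n:ℝ) + 1)*(2*(n:ℝ) + 3)*(2*(n:ℝ) + 5)
        *(2*(n:ℝ) + 7)) := by
  have d1 : 2*(n:ℝ) + 1 ≠ 0 := by simpa using odd_ne_zero n 1 (by norm_num)
  have d3 : 2*(n:ℝ) + 3 ≠ 0 := by simpa using odd_ne_zero n 3 (by norm_num)
  have d5 : 2*(n:ℝ) + 5 ≠ 0 := by simpa using odd_ne_zero n 5 (by norm_num)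
  have d7 : 2*(n:ℝ) + 7 ≠ 0 := by simpa using odd_ne_zero n 7 (by norm_num)
  have e1 : 2*(n:ℝ) - 1 ≠ 0 := by simpa [sub_eq_add_neg] using odd_ne_zero n (-1) (by norm_num)
  have e3 : 2*(n:ℝ) - 3 ≠ 0 := by simpa [sub_eq_add_neg] using odd_ne_zero n (-3) (by norm_num)
  have e5 : 2*(n:ℝ) - 5 ≠ 0 := by simpa [sub_eq_add_neg] using odd_ne_zero n (-5) (by norm_num)
  have r0 := moment_zero n
  have r1 := moment_one n
  have r2 := moment_two n
  have r3 := moment_three n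
  have q0 : legP 0 n = integ (legendrePoly n ^ 2) := by
    rw [legP_eq, legendrePoly_zero, one_pow, one_mul]
  have q1 : legP 1 n = integ (X^2 * legendrePoly n ^ 2) := by
    rw [legP_eq, legendrePoly_one]
  have q2 : legP 2 n = 1/4 * (9 * integ (X^4 * legendrePoly n ^ 2)
      - 6 * integ (X^2 * legendrePoly n ^ 2) + integ (legendrePoly n ^ 2)) := by
    rw [legP_eq, legendrePoly_two]
    simp only [← integ_C_mul, ← map_add, ← map_sub]
    congr 1
    apply Polynomial.funext
    intro x
    simp
    ring
  have q3 : legP 3 n = 1/4 * (25 * integ (X^6 * legendrePoly n ^ 2)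
      - 30 * integ (X^4 * legendrePoly n ^ 2) + 9 * integ (X^2 * legendrePoly n ^ 2)) := by
    rw [legP_eq, legendrePoly_three]
    simp only [← integ_C_mul, ← map_add, ← map_sub]
    congr 1
    apply Polynomial.funext
    intro x
    simp
    ring
  rw [q0, q1, q2, q3]
  generalize integ (legendrePoly n ^ 2) = M0 at *
  generalize integ (X^2 * legendrePoly n ^ 2) = M1 at *
  generalize integ (X^4 * legendrePoly n ^ 2) = M2 at *
  generalize integ (X^6 * legendrePoly n ^ 2) = M3 at *
  have s0 : M0 = 2 / (2*(n:ℝ) + 1) := by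
    rw [eq_div_iff d1]; linear_combination r0
  have s1 : M1 = (2*((n:ℝ)*(n+1)) - 1) * M0 / ((2*(n:ℝ) - 1) * (2*(n:ℝ) + 3)) := by
    rw [eq_div_iff (by positivity)]; linear_combination -r1
  have s2 : M2 = (3 * M0 + (6*((n:ℝ)*(n+1)) - 27) * M1)
      / (2 * ((2*(n:ℝ) - 3) * (2*(n:ℝ) + 5))) := by
    rw [eq_div_iff (by positivity)]; linear_combination -r2
  have s3 : M3 = (30 * M1 + (10*((n:ℝ)*(n+1)) - 125) * M2)
      / (3 * ((2*(n:ℝ) - 5) * (2*(n:ℝ) + 7))) := by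
    rw [eq_div_iff (by positivity)]; linear_combination -r3
  refine ⟨s0, ?_, ?_, ?_⟩
  · rw [s1, s0]; field_simp
  · rw [s2, s1, s0]; field_simp; ring
  · rw [s3, s2, s1, s0]; field_simp; ring
end

section
/- For all real numbers m and n such that m ≠ −1, m ≠ 1/2, n ≠ −1/2, and (n − m + 1)(n + m) ≠ 0, the coefficients satisfy the identity α_m^{n−1} + α_m^n + α_m^{n+1} − α_{m−1}^{n−1} − α_{m−1}^n − α_{m−1}^{n+1} + α_{m−2}^n = 1, where α_m^{n−1} = [(2m+1)n/((m+1)(2n+1))]², α_m^n = (m(2m+1)(n²+n−m²−m)/((m+1)³(2m−1))) · [(m−1)m/(n²+n−m²+m) + 2/(2n+1)²], α_m^{n+1} = [(2m+1)(n+1)/((m+1)(2n+1))]², α_{m−1}^{n−1} = (m−1)(2m−1)(2m+1)(n²+n−m²−m)n² / ((m+1)³(n²+n−m²+m)(2n+1)²), α_{m−1}^n = 2m(n²+n−m²−m)/((m+1)³(2n+1)²) + (m/(m+1))², α_{m−1}^{n+1} = (m−1)(2m−1)(2m+1)(n²+n−m²−m)(n+1)² / ((m+1)³(n²+n−m²+m)(2n+1)²),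 and α_{m−2}^n = (m−1)³(2m+1)(n²+n−m²−m) / ((m+1)³(2m−1)(n²+n−m²+m)). -/
/-!
The hypotheses say exactly that no denominator `m + 1`, `2m - 1`, `2n + 1`,
`n² + n - m² + m = (n - m + 1)(n + m)` vanishes, so the claim is an identity of rational functions
in `m` and `n`; clearing denominators turns it into a polynomial identity.
-/

/-- Coefficient `α_m^{n-1}`. -/
noncomputable def alphaMNm1 (m n : ℝ) : ℝ := ((2*m+1)*n / ((m+1)*(2*n+1)))^2

/-- Coefficient `α_m^n`. -/
noncomputable def alphaMN (m n : ℝ) : ℝ :=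
  (m*(2*m+1)*(n^2+n-m^2-m) / ((m+1)^3*(2*m-1))) *
    ((m-1)*m/(n^2+n-m^2+m) + 2/(2*n+1)^2)

/-- Coefficient `α_m^{n+1}`. -/
noncomputable def alphaMNp1 (m n : ℝ) : ℝ := ((2*m+1)*(n+1) / ((m+1)*(2*n+1)))^2

/-- Coefficient `α_{m-1}^{n-1}`. -/
noncomputable def alphaMm1Nm1 (m n : ℝ) : ℝ :=
  (m-1)*(2*m-1)*(2*m+1)*(n^2+n-m^2-m)*n^2 / ((m+1)^3*(n^2+n-m^2+m)*(2*n+1)^2)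

/-- Coefficient `α_{m-1}^n`. -/
noncomputable def alphaMm1N (m n : ℝ) : ℝ :=
  2*m*(n^2+n-m^2-m)/((m+1)^3*(2*n+1)^2) + (m/(m+1))^2

/-- Coefficient `α_{m-1}^{n+1}`. -/
noncomputable def alphaMm1Np1 (m n : ℝ) : ℝ :=
  (m-1)*(2*m-1)*(2*m+1)*(n^2+n-m^2-m)*(n+1)^2 / ((m+1)^3*(n^2+n-m^2+m)*(2*n+1)^2)

/-- Coefficient `α_{m-2}^n`. -/
noncomputable def alphaMm2N (m n : ℝ) : ℝ :=
  (m-1)^3*(2*m+1)*(n^2+n-m^2-m) / ((m+1)^3*(2*m-1)*(n^2+n-m^2+m))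

/-- The coefficients in the Legendre recursion sum (with signs) to `1`. -/
theorem alpha_sum_eq_one (m n : ℝ) (h1 : m ≠ -1) (h2 : m ≠ 1/2) (h3 : n ≠ -1/2)
    (h4 : (n - m + 1) * (n + m) ≠ 0) :
    alphaMNm1 m n + alphaMN m n + alphaMNp1 m n
      - alphaMm1Nm1 m n - alphaMm1N m n - alphaMm1Np1 m n
      + alphaMm2N m n = 1 := by
  have hm1 : m + 1 ≠ 0 := fun h => h1 (by linarith)
  have hm2 : 2 * m - 1 ≠ 0 := fun h => h2 (by linarith)
  have hn : 2 * n + 1 ≠ 0 := fun h => h3 (by linarith)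
  -- Naming the quadratic denominator keeps `field_simp` from rewriting it into a form
  -- that no longer matches the hypothesis that it is nonzero.
  obtain ⟨D, hD⟩ : ∃ D, D = n ^ 2 + n - m ^ 2 + m := ⟨_, rfl⟩
  have hD0 : D ≠ 0 := by
    intro h
    exact h4 (by linear_combination h - hD)
  unfold alphaMNm1 alphaMN alphaMNp1 alphaMm1Nm1 alphaMm1N alphaMm1Np1 alphaMm2N
  rw [← hD]
  field_simp
  subst hD
  ring
end

section
/- Let m be a real number with 1/4 < m < 41/4, and let i, j, k, l be integers with 0 < i ≤ j ≤ k ≤ l, j − i > l − k, and i + j + k + l even. Setting λ_p = √(p(p+1) + m) and δ = (λ_j − λ_i) − (λ_l − λ_k), one has |δ| ≥ 2 − (4m − 1)/(4√(i(i+1)+m) + 4i + 2) > 0. -/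
/-!
Write `λ_p = √(p(p+1) + m) = √((p + 1/2)² + c)` with `c = m - 1/4 > 0`, and let
`ε_p = λ_p - (p + 1/2) = c / (λ_p + p + 1/2)`, so that the fraction in the statement is `ε_i`.
Then `ε` is positive and decreasing in `p`, and
`δ = ((j - i) - (l - k)) + ε_j - ε_i + (ε_k - ε_l)`.
The integer `(j - i) - (l - k)` is positive and even, hence at least `2`, which gives
`δ ≥ 2 - ε_i`. Finally `ε_i < 2` amounts to `c < 4 + 4 (i + 1/2)`, which follows from `c < 10`
and `i ≥ 1`.
-/

/-- Positivity of `ε_x`. -/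
lemma add_half_lt_sqrt {m x : ℝ} (hm : 1/4 < m) : x + 1/2 < Real.sqrt (x*(x+1) + m) :=
  Real.lt_sqrt_of_sq_lt (by nlinarith)

/-- Monotonicity of `ε`: `x ↦ √(x(x+1) + m)` grows no faster than `x`. -/
lemma sqrt_sub_sqrt_le {m x y : ℝ} (hm : 1/4 < m) (hx : 0 < x) (hxy : x ≤ y) :
    Real.sqrt (y*(y+1) + m) - Real.sqrt (x*(x+1) + m) ≤ y - x := by
  have h := add_half_lt_sqrt (x := x) hm
  have hs := Real.sq_sqrt (show 0 ≤ x*(x+1) + m by nlinarith)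
  have : Real.sqrt (y*(y+1) + m) ≤ Real.sqrt (x*(x+1) + m) + (y - x) := by
    apply Real.sqrt_le_iff.2
    constructor
    · linarith
    · nlinarith [mul_nonneg (sub_nonneg.2 hxy) (sub_nonneg.2 h.le)]
  linarith

/-- The closed form of `ε_x`, obtained by rationalizing. -/
lemma frac_eq {m x : ℝ} (hm : 1/4 < m) (hx : 0 < x) :
    (4*m - 1)/(4*Real.sqrt (x*(x+1) + m) + 4*x + 2) = Real.sqrt (x*(x+1) + m) - x - 1/2 := by
  have h := add_half_lt_sqrt (x := x) hm
  have hs := Real.sq_sqrt (show 0 ≤ x*(x+1) + m by nlinarith)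
  rw [div_eq_iff (by linarith)]
  nlinarith

/-- For `1/4 < m < 41/4` and integers `0 < i ≤ j ≤ k ≤ l` with `j - i > l - k` and
`i+j+k+l` even, with `λ_p = √(p(p+1)+m)` and `δ = (λ_j - λ_i) - (λ_l - λ_k)`, one has
`|δ| ≥ 2 - (4m-1)/(4√(i(i+1)+m) + 4i + 2) > 0`. -/
theorem delta_lower_bound (m : ℝ) (hm1 : 1/4 < m) (hm2 : m < 41/4)
    (i j k l : ℤ) (hi : 0 < i) (hij : i ≤ j) (hjk : j ≤ k) (hkl : k ≤ l)
    (hgap : l - k < j - i) (heven : Even (i + j + k + l)) :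
    2 - (4*m - 1)/(4*Real.sqrt ((i:ℝ)*((i:ℝ)+1) + m) + 4*(i:ℝ) + 2) ≤
      |(Real.sqrt ((j:ℝ)*((j:ℝ)+1) + m) - Real.sqrt ((i:ℝ)*((i:ℝ)+1) + m))
        - (Real.sqrt ((l:ℝ)*((l:ℝ)+1) + m) - Real.sqrt ((k:ℝ)*((k:ℝ)+1) + m))| ∧
    0 < 2 - (4*m - 1)/(4*Real.sqrt ((i:ℝ)*((i:ℝ)+1) + m) + 4*(i:ℝ) + 2) := by
  have hi1 : (1:ℝ) ≤ i := by exact_mod_cast hi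
  have hk0 : (0:ℝ) < k := by exact_mod_cast (by omega : 0 < k)
  have hkl' : (k:ℝ) ≤ l := by exact_mod_cast hkl
  have hgap2 : (2:ℝ) ≤ (j - i) - (l - k) := by
    obtain ⟨r, hr⟩ := heven
    exact_mod_cast (by omega : (2:ℤ) ≤ (j - i) - (l - k))
  rw [frac_eq hm1 (by linarith)]
  constructor
  · refine le_trans ?_ (le_abs_self _)
    have h1 := add_half_lt_sqrt (x := (j:ℝ)) hm1
    have h2 := sqrt_sub_sqrt_le hm1 hk0 hkl'
    linarith
  · have h : Real.sqrt ((i:ℝ)*((i:ℝ)+1) + m) < i + 5/2 :=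
      (Real.sqrt_lt' (by linarith)).2 (by nlinarith)
    linarith
end

section
/- For every real number m > 1/4 and all integers i ≥ 1 and h ≥ 0, one has h − ( √((i+h)(i+h+1) + m) − √(i(i+1) + m) ) ≤ (m − 1/4) / ( √(i(i+1) + m) + i + 1/2 ). -/
/-- For `m > 1/4`, `i ≥ 1`, `h ≥ 0`:
`h - (√((i+h)(i+h+1)+m) - √(i(i+1)+m)) ≤ (m - 1/4)/(√(i(i+1)+m) + i + 1/2)`. -/
theorem gap_defect_bound (m : ℝ) (hm : 1/4 < m) (i h : ℤ) (hi : 1 ≤ i) (hh : 0 ≤ h) :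
    (h:ℝ) - (Real.sqrt (((i:ℝ)+(h:ℝ))*((i:ℝ)+(h:ℝ)+1) + m)
        - Real.sqrt ((i:ℝ)*((i:ℝ)+1) + m)) ≤
      (m - 1/4) / (Real.sqrt ((i:ℝ)*((i:ℝ)+1) + m) + (i:ℝ) + 1/2) := by
  have hi' : (1:ℝ) ≤ i := by exact_mod_cast hi
  have hh' : (0:ℝ) ≤ h := by exact_mod_cast hh
  -- Since `p (p + 1) + m = (p + 1/2)² + (m - 1/4)`, the root at `p = i + h` is at least `p + 1/2`.
  have hj : (i:ℝ) + h + 1/2 ≤ Real.sqrt (((i:ℝ)+(h:ℝ))*((i:ℝ)+(h:ℝ)+1) + m) :=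
    Real.le_sqrt_of_sq_le (by nlinarith)
  have hsq := Real.sq_sqrt (show (0:ℝ) ≤ (i:ℝ)*((i:ℝ)+1) + m by nlinarith)
  have h0 := Real.sqrt_nonneg ((i:ℝ)*((i:ℝ)+1) + m)
  set s := Real.sqrt ((i:ℝ)*((i:ℝ)+1) + m)
  -- At `p = i` the same identity, rationalized, turns the right-hand side into `s - (i + 1/2)`.
  have hr : (m - 1/4) / (s + (i:ℝ) + 1/2) = s - (i + 1/2) := by
    rw [div_eq_iff (by positivity)]
    linear_combination -hsq
  rw [hr]
  linarith
end

section
/- For every natural number m, the limit c(m) := lim_{n→∞} n · P(m,n) exists; moreover c(0) = 1, c(1) = 1/2, c(2) = 11/32, c(3) = 17/64, and for every integer m ≥ 1 one has 0 ≤ c(m+1) < c(m) ≤ 1/2 and c(m+1) ≤ 15/(16(m+2)) + 1/32. -/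
/-!
As `n → ∞`, the measures `n P_n(x)² dx` on `[-1, 1]` converge weakly to the arcsine measure
`dx / (π √(1 - x²))`. This is proved algebraically: orthogonality gives
`n ∫ P_n P_{n+s} → δ_{s,0}`, and Bonnet's recurrence shows that multiplication by `x` asymptotically
averages the shifts `s + 1` and `s - 1` (`limit_X_mul`), which is the recurrence of the Chebyshev
polynomials; hence `n ∫ T_r P_n² → δ_{r,0}` (`limit_T`, `limit_T_int`).

With `aₖ = binom(2k, k) / 4^k`, one has `P_m(cos θ) = ∑ₖ aₖ a_{m-k} cos((m - 2k)θ)`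
(`leg_eq_sum_T`), so the limit is `c(m) = ∑ₖ aₖ² a_{m-k}²` (`legP_limit`). The generating function
of `aₖ²` solves a second-order differential equation, so its square solves the symmetric square of
that equation, which yields a three-term recurrence for `c` (`cc_rec`). It telescopes to
`(n+1)³ (c(n) - c(n+1)) = ∑_{j ≤ n} (j + 1/2) c(j)` (`cc_sub`), from which `c` is strictly
decreasing. By the same identity `(j + 1/2) c(j)` is nondecreasing (`weighted_step`, `ss_le`), and
it exceeds `15/16` at `j = 4`; so the right-hand side grows fast enough for
`c(n) - 15/(16(n+1))` to be nonincreasing from `n = 2` on, where its value is `1/32` (`cc_bound`).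
-/

open Filter

/-! ### The limit constants -/

section

open PowerSeries

/-- The Euler operator `t d/dt` on formal power series. -/
noncomputable def euler : Derivation ℝ ℝ⟦X⟧ ℝ⟦X⟧ := (X : ℝ⟦X⟧) • d⁄dX ℝ

lemma coeff_euler (n : ℕ) (f : ℝ⟦X⟧) : coeff n (euler f) = n * coeff n f := by
  rw [euler, Derivation.smul_apply, smul_eq_mul]
  rcases n with _ | n
  · simp
  · rw [coeff_succ_X_mul, coeff_derivative]
    push_cast
    ring

lemma euler_X : euler (X : ℝ⟦X⟧) = X := by
  simp [euler]

/-- `binom(2k, k) / 4^k`, the coefficients of `(1 - t)^{-1/2}`. -/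
noncomputable def acoef (k : ℕ) : ℝ := (k.centralBinom : ℝ) / 4 ^ k

lemma acoef_zero : acoef 0 = 1 := by simp [acoef]

lemma acoef_succ (k : ℕ) : (2 * (k:ℝ) + 2) * acoef (k + 1) = (2 * k + 1) * acoef k := by
  have h : ((k:ℝ) + 1) * (k + 1).centralBinom = 2 * (2 * k + 1) * k.centralBinom := by
    exact_mod_cast Nat.succ_mul_centralBinom_succ k
  rw [acoef, acoef, pow_succ]
  field_simp
  linear_combination 2 * h

lemma acoef_pos (k : ℕ) : 0 < acoef k := by
  have := k.centralBinom_pos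
  unfold acoef
  positivity

/-- The limit constants: the coefficients of `(∑ acoef k ^ 2 t^k)^2`. -/
noncomputable def cc (m : ℕ) : ℝ :=
  ∑ k ∈ Finset.range (m + 1), acoef k ^ 2 * acoef (m - k) ^ 2

/-- The generating function `f` of `acoef k ^ 2` (a complete elliptic integral) solves a
second-order equation, so `f ^ 2` solves its symmetric square, which has order three; this is the
coefficient form of that equation. -/
lemma cc_rec (n : ℕ) :
    2 * ((n:ℝ) + 2) ^ 3 * cc (n + 2)
      = (2 * n + 3) * (2 * (n + 1) ^ 2 + 2 * (n + 1) + 1) * cc (n + 1)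
        - 2 * (n + 1) ^ 3 * cc n := by
  set f : ℝ⟦X⟧ := PowerSeries.mk fun k => acoef k ^ 2 with hf
  have hy : ∀ m, coeff m (f * f) = cc m := by
    intro m
    rw [coeff_mul, Finset.Nat.sum_antidiagonal_eq_sum_range_succ_mk, cc]
    simp [hf]
  have h4 : (C (4:ℝ) : ℝ⟦X⟧) = 4 := map_ofNat C 4
  have E0 : C (4:ℝ) * euler (euler f)
      = X * (C 4 * euler (euler f) + C 4 * euler f + f) := by
    ext k
    rcases k with _ | k
    · simp [coeff_euler]
    · rw [coeff_succ_X_mul]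
      simp only [map_add, coeff_C_mul, coeff_euler, hf, coeff_mk]
      have := acoef_succ k
      push_cast
      linear_combination ((2 * (k:ℝ) + 2) * acoef (k + 1) + (2 * k + 1) * acoef k) * this
  rw [h4] at E0
  have E1 := congrArg euler E0
  have e4 : euler (4 : ℝ⟦X⟧) = 0 := by
    have := euler.map_natCast 4
    simpa using this
  simp only [Derivation.leibniz, map_add, euler_X, smul_eq_mul, e4] at E1
  set y := f * f with hydef
  have y1 : euler y = 2 * f * euler f := by
    rw [hydef, Derivation.leibniz, smul_eq_mul]; ring
  have e2 : euler (2 : ℝ⟦X⟧) = 0 := by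
    have := euler.map_natCast 2
    simpa using this
  have y2 : euler (euler y) = 2 * euler f * euler f + 2 * f * euler (euler f) := by
    rw [y1]; simp only [Derivation.leibniz, smul_eq_mul, e2]; ring
  have y3 : euler (euler (euler y))
      = 6 * euler f * euler (euler f) + 2 * f * euler (euler (euler f)) := by
    rw [y2]; simp only [map_add, Derivation.leibniz, smul_eq_mul, e2]; ring
  have key : C (2:ℝ) * euler (euler (euler y))
      = X * (C 4 * euler (euler (euler y)) + C 6 * euler (euler y) + C 4 * euler y + y)
        - X * (X * (C 2 * (euler (euler (euler y)) + C 3 * euler (euler y) + C 3 * euler y + y)))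
      := by
    rw [y3, y2, y1]
    simp only [map_ofNat]
    linear_combination (1 - X) * f * E1 + (3 * (1 - X) * euler f - X * f) * E0
  have := congrArg (coeff (n + 2)) key
  simp only [map_sub, map_add, coeff_succ_X_mul, coeff_C_mul, coeff_euler, hy] at this
  push_cast at this
  linear_combination this

lemma cc_pos (n : ℕ) : 0 < cc n := by
  unfold cc
  refine Finset.sum_pos (fun k _ => ?_) (by simp)
  have := acoef_pos k
  have := acoef_pos (n - k)
  positivity

lemma cc_zero : cc 0 = 1 := by simp [cc, acoef_zero]

lemma cc_one : cc 1 = 1 / 2 := by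
  have h := acoef_succ 0
  simp [acoef_zero] at h
  have h1 : acoef 1 = 1 / 2 := by linarith
  simp [cc, Finset.sum_range_succ, acoef_zero, h1]
  norm_num

lemma cc_two : cc 2 = 11 / 32 := by
  have h := cc_rec 0
  norm_num [cc_zero, cc_one] at h
  linarith

lemma cc_three : cc 3 = 17 / 64 := by
  have h := cc_rec 1
  norm_num [cc_one, cc_two] at h
  linarith

/-- Partial sums of `(j + 1/2) c_j`, in terms of which the recurrence telescopes. -/
noncomputable def ss (n : ℕ) : ℝ := ∑ j ∈ Finset.range (n + 1), ((j:ℝ) + 1 / 2) * cc j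

lemma ss_succ (n : ℕ) : ss (n + 1) = ss n + ((n:ℝ) + 1 + 1 / 2) * cc (n + 1) := by
  rw [ss, Finset.sum_range_succ, ← ss]
  push_cast
  ring

lemma ss_zero : ss 0 = 1 / 2 := by simp [ss, cc_zero]

/-- The three-term recurrence in telescoped form: it says that
`(n+1)³ (c_n - c_{n+1}) - n³ (c_{n-1} - c_n) = (n + 1/2) c_n`. -/
lemma cc_sub (n : ℕ) : ((n:ℝ) + 1) ^ 3 * (cc n - cc (n + 1)) = ss n := by
  induction n with
  | zero => rw [ss_zero, cc_zero, cc_one]; norm_num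
  | succ n ih =>
    rw [ss_succ, ← ih]
    push_cast
    linear_combination (-1 / 2) * cc_rec n

lemma ss_pos (n : ℕ) : 0 < ss n := by
  unfold ss
  refine Finset.sum_pos (fun k _ => ?_) (by simp)
  have := cc_pos k
  positivity

lemma cc_lt (n : ℕ) : cc (n + 1) < cc n := by
  have h := cc_sub n
  have h2 := ss_pos n
  rw [← h] at h2
  have := pos_of_mul_pos_right h2 (by positivity)
  linarith

/-- If `(j + 1/2) c_j` is nondecreasing up to `n`, its partial sum is at most `n + 1` times its
last term, and then the next step is nondecreasing too. -/
lemma weighted_step (n : ℕ) (h : ss n ≤ (n + 1) * (((n:ℝ) + 1 / 2) * cc n)) :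
    ((n:ℝ) + 1 / 2) * cc n ≤ ((n:ℝ) + 1 + 1 / 2) * cc (n + 1) := by
  have h1 := cc_sub n
  have hc := cc_pos n
  have hn : (0:ℝ) < (n:ℝ) + 1 := by positivity
  have h2 : 0 ≤ ((n:ℝ) + 1) ^ 3 *
      (((n:ℝ) + 1 + 1 / 2) * cc (n + 1) - ((n:ℝ) + 1 / 2) * cc n) := by
    have : ((n:ℝ) + 1) ^ 3 *
      (((n:ℝ) + 1 + 1 / 2) * cc (n + 1) - ((n:ℝ) + 1 / 2) * cc n)
        = ((n:ℝ) + 3 / 2) * ((n + 1) * (((n:ℝ) + 1 / 2) * cc n) - ss n)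
          + (n + 1) / 4 * cc n := by
      rw [← h1]; ring
    rw [this]
    have : 0 ≤ (n + 1) * (((n:ℝ) + 1 / 2) * cc n) - ss n := by linarith
    positivity
  have := nonneg_of_mul_nonneg_right h2 (by positivity)
  linarith

lemma ss_le (n : ℕ) : ss n ≤ (n + 1) * (((n:ℝ) + 1 / 2) * cc n) := by
  induction n with
  | zero => rw [ss_zero, cc_zero]; norm_num
  | succ n ih =>
    have h := weighted_step n ih
    rw [ss_succ]
    push_cast
    have hn : (0:ℝ) ≤ (n:ℝ) + 1 := by positivity
    nlinarith [mul_le_mul_of_nonneg_left h hn]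

/-- `(j + 1/2) c_j` is nondecreasing, and exceeds `15/16` from `j = 4` on. -/
lemma weighted_ge (n : ℕ) : 15 / 16 ≤ (((n:ℝ) + 4) + 1 / 2) * cc (n + 4) := by
  induction n with
  | zero =>
    have h := cc_rec 2
    norm_num [cc_two, cc_three] at h
    norm_num
    linarith
  | succ n ih =>
    have h := weighted_step (n + 4) (ss_le _)
    push_cast at h ⊢
    rw [show n + 1 + 4 = n + 4 + 1 by ring]
    linarith

/-- The lower bound is what makes `c_n - 15/(16(n+1))` nonincreasing from `n = 2` on; it is an
equality at index `2`. -/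
lemma ss_ge (n : ℕ) : 15 / 16 * ((n:ℝ) + 2 + 1 / (n + 4)) ≤ ss (n + 2) := by
  have s1 := ss_succ 0
  have s2 := ss_succ 1
  have s3 := ss_succ 2
  norm_num [ss_zero, cc_one, cc_two, cc_three] at s1 s2 s3
  rw [s1] at s2
  rw [s2] at s3
  -- The increments dominate only from index `4` on, so indices `2` and `3` are checked by hand.
  rcases n with _ | n
  · norm_num [s2]
  induction n with
  | zero => norm_num [s3]
  | succ n ih =>
    rw [show n + 1 + 1 + 2 = (n + 3) + 1 by ring, ss_succ, show n + 3 + 1 = n + 4 by ring]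
    have h := weighted_ge n
    have h2 : 1 / ((n:ℝ) + 1 + 1 + 4) ≤ 1 / ((n:ℝ) + 1 + 4) := by
      apply one_div_le_one_div_of_le <;> linarith
    rw [show n + 1 + 2 = n + 3 by ring] at ih
    push_cast at h ih ⊢
    linarith

/-- Equality holds at indices `2` and `3`. -/
lemma cc_bound (n : ℕ) : cc (n + 2) ≤ 15 / (16 * ((n:ℝ) + 3)) + 1 / 32 := by
  induction n with
  | zero => rw [cc_two]; norm_num
  | succ n ih =>
    have h := cc_sub (n + 2)
    have h2 := ss_ge n
    rw [← h] at h2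
    push_cast at h2 ⊢
    rw [show n + 1 + 2 = n + 2 + 1 by ring]
    have h3 : 15 / (16 * ((n:ℝ) + 3)) - 15 / (16 * ((n:ℝ) + 1 + 3)) ≤ cc (n + 2) - cc (n + 2 + 1) := by
      refine le_of_mul_le_mul_left ?_ (show (0:ℝ) < ((n:ℝ) + 2 + 1) ^ 3 by positivity)
      refine le_trans (le_of_eq ?_) h2
      field_simp
      ring
    linarith

end

open Polynomial

/-! ### Legendre polynomials: recurrence, differential equation, orthogonality -/

/-- The Legendre polynomial of degree `n` as an element of `ℝ[X]`, by Rodrigues's formula. -/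
noncomputable def leg (n : ℕ) : ℝ[X] :=
  C (1 / ((2:ℝ)^n * n.factorial)) * derivative^[n] ((X ^ 2 - 1) ^ n)

lemma iteratedDeriv_eval (n : ℕ) (p : ℝ[X]) :
    iteratedDeriv n (fun y => p.eval y) = fun y => (derivative^[n] p).eval y := by
  induction n with
  | zero => simp
  | succ n ih =>
    rw [iteratedDeriv_succ, ih, Function.iterate_succ_apply']
    ext x
    simp

lemma legendreP_eq (n : ℕ) (x : ℝ) : legendreP n x = (leg n).eval x := by
  have h := congrFun (iteratedDeriv_eval n ((X ^ 2 - 1) ^ n)) x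
  simp only [eval_pow, eval_sub, eval_X, eval_one] at h
  rw [legendreP, h, leg, eval_C_mul]

/-- `n D^{n-1} (x² - 1)^n / (2^n n!)`, the Leibniz correction term in `leg_succ_aux`. For `n = 0` the
exponent truncates, but the factor `n` makes it `0`. -/
noncomputable def legAux (n : ℕ) : ℝ[X] :=
  C (1 / ((2:ℝ)^n * n.factorial)) * ((n : ℝ[X]) * derivative^[n - 1] ((X ^ 2 - 1) ^ n))

lemma derivative_legAux (n : ℕ) : derivative (legAux n) = (n : ℝ[X]) * leg n := by
  rcases n with _ | n
  · simp [legAux]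
  · rw [legAux, leg, derivative_C_mul, ← C_eq_natCast, derivative_C_mul]
    simp only [Nat.add_sub_cancel, ← Function.iterate_succ_apply' (f := derivative)]
    ring

lemma leg_norm_succ (n : ℕ) :
    C (1 / ((2:ℝ)^(n+1) * (n+1).factorial)) * (2 * (n + 1) : ℝ[X])
      = C (1 / ((2:ℝ)^n * n.factorial)) := by
  have : (2 * (n + 1) : ℝ[X]) = C (2 * ((n:ℝ) + 1)) := by simp [map_ofNat]
  rw [this, ← C_mul]
  congr 1
  rw [Nat.factorial_succ]
  push_cast
  field_simp
  ring

/-- Differentiate `(x² - 1)^{n+1}` once by the chain rule, then `n` times by Leibniz. -/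
lemma leg_succ_aux (n : ℕ) : leg (n + 1) = X * leg n + legAux n := by
  have h : derivative (((X:ℝ[X]) ^ 2 - 1) ^ (n + 1))
      = (2 * (n + 1) : ℝ[X]) * ((X ^ 2 - 1) ^ n * X) := by
    rw [derivative_pow_succ]
    simp
    ring
  have h2 : (2 * (n + 1) : ℝ[X]) = C (2 * ((n:ℝ) + 1)) := by simp [map_ofNat]
  rw [leg, Function.iterate_succ_apply, h, h2, iterate_derivative_C_mul, ← h2, ← mul_assoc,
    leg_norm_succ, iterate_derivative_mul_X, leg, legAux, nsmul_eq_mul]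
  ring

/-- Differentiate `(x² - 1) * (x² - 1)^n` by Leibniz. -/
lemma leg_succ_aux' (n : ℕ) :
    2 * ((n : ℝ[X]) + 1) * leg (n + 1)
      = (X ^ 2 - 1) * derivative (leg n) + 2 * ((n : ℝ[X]) + 1) * X * leg n + ((n : ℝ[X]) + 1) * legAux n := by
  set w : ℝ[X] := (X ^ 2 - 1) ^ n with hw
  have h0 : ((X:ℝ[X]) ^ 2 - 1) ^ (n + 1) = w * X ^ 2 - w := by rw [hw]; ring
  have e0 : derivative^[n + 1] w = derivative (derivative^[n] w) :=
    Function.iterate_succ_apply' _ _ _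
  have h1 : derivative^[n + 1] (w * X ^ 2) = derivative (derivative^[n] w) * X ^ 2
      + 2 * ((n : ℝ[X]) + 1) * derivative^[n] w * X + ((n : ℝ[X]) + 1) * (n : ℝ[X]) * derivative^[n - 1] w := by
    rw [pow_two, ← mul_assoc, iterate_derivative_mul_X, iterate_derivative_mul_X, e0]
    simp only [Nat.add_sub_cancel, nsmul_eq_mul, iterate_derivative_mul_X]
    push_cast
    ring
  have hd : derivative (leg n) = C (1 / ((2:ℝ)^n * n.factorial)) * derivative (derivative^[n] w) := by
    rw [leg, derivative_C_mul]
  have hl : 2 * ((n : ℝ[X]) + 1) * leg (n + 1) = C (1 / ((2:ℝ)^n * n.factorial)) *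
      derivative^[n + 1] (w * X ^ 2 - w) := by
    rw [← leg_norm_succ, leg, h0]
    ring
  rw [hl, iterate_derivative_sub, h1, hd, legAux, leg, e0]
  ring

lemma leg_zero : leg 0 = 1 := by simp [leg]

lemma leg_one : leg 1 = X := by
  rw [leg_succ_aux, leg_zero, legAux]
  simp

lemma derivative_leg_succ (n : ℕ) :
    derivative (leg (n + 1)) = X * derivative (leg n) + ((n : ℝ[X]) + 1) * leg n := by
  rw [leg_succ_aux, derivative_add, derivative_mul, derivative_legAux, derivative_X]
  ring

/-- Eliminate `legAux` between `leg_succ_aux` and `leg_succ_aux'`. -/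
lemma leg_succ_deriv (n : ℕ) :
    ((n : ℝ[X]) + 1) * leg (n + 1) = (X ^ 2 - 1) * derivative (leg n) + ((n : ℝ[X]) + 1) * X * leg n := by
  linear_combination leg_succ_aux' n - (n + 1 : ℝ[X]) * leg_succ_aux n

/-- Bonnet's three-term recurrence. -/
lemma leg_rec (n : ℕ) :
    ((n : ℝ[X]) + 2) * leg (n + 2)
      = (2 * (n : ℝ[X]) + 3) * X * leg (n + 1) - ((n : ℝ[X]) + 1) * leg n := by
  have h := leg_succ_deriv (n + 1)
  push_cast at h
  linear_combination h + (X ^ 2 - 1) * derivative_leg_succ n - X * leg_succ_deriv n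

/-- Legendre's differential equation. -/
lemma leg_ode (n : ℕ) :
    derivative ((X ^ 2 - 1) * derivative (leg n)) = (n : ℝ[X]) * ((n : ℝ[X]) + 1) * leg n := by
  have h := congrArg derivative (leg_succ_deriv n)
  have e : ((n:ℝ[X]) + 1) = C ((n:ℝ) + 1) := by simp
  rw [e, derivative_C_mul, mul_assoc, derivative_add, derivative_C_mul, derivative_mul (f := X),
    derivative_X, ← e] at h
  linear_combination -h + ((n : ℝ[X]) + 1) * derivative_leg_succ n

/-- Integration over `[-1, 1]` as a linear functional on polynomials. -/
noncomputable def J : ℝ[X] →ₗ[ℝ] ℝ where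
  toFun q := ∫ x in (-1:ℝ)..1, q.eval x
  map_add' p q := by
    simp only [eval_add]
    exact intervalIntegral.integral_add (p.continuous.intervalIntegrable _ _)
      (q.continuous.intervalIntegrable _ _)
  map_smul' r p := by simp

lemma J_apply (q : ℝ[X]) : J q = ∫ x in (-1:ℝ)..1, q.eval x := rfl

lemma J_derivative (q : ℝ[X]) : J (derivative q) = q.eval 1 - q.eval (-1) := by
  rw [J_apply]
  exact intervalIntegral.integral_eq_sub_of_hasDerivAt (fun x _ => q.hasDerivAt x)
    ((derivative q).continuous.intervalIntegrable _ _)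

lemma J_C_mul (r : ℝ) (q : ℝ[X]) : J (C r * q) = r * J q := by
  rw [← smul_eq_C_mul, map_smul, smul_eq_mul]

/-- Orthogonality: `(x² - 1)(P_m' P_n - P_n' P_m)` vanishes at `±1`, and its derivative is
`(m(m+1) - n(n+1)) P_m P_n` by the differential equation. -/
lemma J_leg_ne {m n : ℕ} (h : m ≠ n) : J (leg m * leg n) = 0 := by
  have e : derivative ((X ^ 2 - 1) * (derivative (leg m) * leg n - derivative (leg n) * leg m))
      = C ((m:ℝ) * (m + 1) - n * (n + 1)) * (leg m * leg n) := by
    have e1 : (X ^ 2 - 1) * (derivative (leg m) * leg n - derivative (leg n) * leg m)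
      = ((X ^ 2 - 1) * derivative (leg m)) * leg n
        - ((X ^ 2 - 1) * derivative (leg n)) * leg m := by ring
    rw [e1, derivative_sub, derivative_mul (g := leg n), derivative_mul (g := leg m), leg_ode,
      leg_ode]
    simp
    ring
  have h1 := J_derivative
    ((X ^ 2 - 1) * (derivative (leg m) * leg n - derivative (leg n) * leg m))
  rw [e, J_C_mul] at h1
  simp at h1
  rcases h1 with h1 | h1
  · exfalso
    apply h
    have h2 : ((m:ℝ) - n) * (m + n + 1) = 0 := by linear_combination h1
    rcases mul_eq_zero.mp h2 with h3 | h3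
    · exact_mod_cast sub_eq_zero.mp h3
    · have : (0:ℝ) < m + n + 1 := by positivity
      linarith
  · exact h1

/-- Bonnet's recurrence and orthogonality evaluate `∫ x P_n P_{n+1}` in two ways, which gives the
ratio of consecutive squared norms. -/
lemma J_leg_self (n : ℕ) : J (leg n * leg n) = 2 / (2 * n + 1) := by
  induction n with
  | zero => rw [leg_zero, J_apply]; norm_num
  | succ n ih =>
    have a1 : C ((2:ℝ) * n + 3) * (X * leg (n + 1) * leg n)
        = C ((n:ℝ) + 2) * (leg (n + 2) * leg n) + C ((n:ℝ) + 1) * (leg n * leg n) := by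
      simp [map_ofNat]
      linear_combination - leg n * leg_rec n
    have a2 : C ((2:ℝ) * n + 1) * (X * leg (n + 1) * leg n)
        = C ((n:ℝ) + 1) * (leg (n + 1) * leg (n + 1)) + C (n:ℝ) * (leg (n - 1) * leg (n + 1)) := by
      rcases n with _ | n
      · simp [leg_zero, leg_one]
      · simp [map_ofNat]
        linear_combination - leg (n + 2) * leg_rec n
    have b1 := congrArg J a1
    have b2 := congrArg J a2
    simp only [map_add J, J_C_mul, J_leg_ne (show n + 2 ≠ n by omega),
      J_leg_ne (show n - 1 ≠ n + 1 by omega), ih] at b1 b2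
    have h1 : (2 * (n:ℝ) + 1) ≠ 0 := by positivity
    have h3 : (2 * (n:ℝ) + 3) ≠ 0 := by positivity
    have h4 : ((n:ℝ) + 1) ≠ 0 := by positivity
    push_cast
    rw [show 2 * ((n:ℝ) + 1) + 1 = 2 * n + 3 by ring]
    field_simp at b1 ⊢
    have : ((n:ℝ) + 1) * (J (leg (n + 1) * leg (n + 1)) * (2 * n + 3) - 2) = 0 := by
      linear_combination b1 - (2 * n + 3) * b2
    rcases mul_eq_zero.mp this with h | h
    · exact absurd h h4
    · linarith

/-! ### Chebyshev expansion of Legendre polynomials -/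

open Polynomial.Chebyshev (T T_zero T_one T_neg_one T_add_two T_natAbs T_mul_T)

/-- Bonnet's recurrence for the cosine expansion, with the Chebyshev polynomials replaced by an
arbitrary sequence `t`. -/
lemma expansion_rec (m : ℕ) (t : ℕ → ℝ[X]) :
    C (2 * ((m:ℝ) + 2)) * ∑ k ∈ Finset.range (m + 3), C (acoef k * acoef (m + 2 - k)) * t k
      = C (2 * (m:ℝ) + 3) * ∑ k ∈ Finset.range (m + 2),
          C (acoef k * acoef (m + 1 - k)) * (t k + t (k + 1))
        - C (2 * ((m:ℝ) + 1)) * ∑ k ∈ Finset.range (m + 1),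
          C (acoef k * acoef (m - k)) * t (k + 1) := by
  have s1 : ∑ k ∈ Finset.range (m + 3), C (acoef k * acoef (m + 2 - k)) * t k
      = ∑ k ∈ Finset.range (m + 1), C (acoef (k + 1) * acoef (m + 1 - k)) * t (k + 1)
        + C (acoef (m + 2)) * t 0 + C (acoef (m + 2)) * t (m + 2) := by
    rw [Finset.sum_range_succ, Finset.sum_range_succ']
    simp [acoef_zero]
  have s2 : ∑ k ∈ Finset.range (m + 2), C (acoef k * acoef (m + 1 - k)) * (t k + t (k + 1))
      = ∑ k ∈ Finset.range (m + 1), C (acoef (k + 1) * acoef (m - k)) * t (k + 1)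
        + C (acoef (m + 1)) * t 0
        + (∑ k ∈ Finset.range (m + 1), C (acoef k * acoef (m + 1 - k)) * t (k + 1)
        + C (acoef (m + 1)) * t (m + 2)) := by
    simp only [mul_add, Finset.sum_add_distrib]
    rw [Finset.sum_range_succ', Finset.sum_range_succ _ (m + 1)]
    simp [acoef_zero]
  have s3 : C (2 * ((m:ℝ) + 2)) * ∑ k ∈ Finset.range (m + 1),
        C (acoef (k + 1) * acoef (m + 1 - k)) * t (k + 1)
      = C (2 * (m:ℝ) + 3) * (∑ k ∈ Finset.range (m + 1),
          C (acoef (k + 1) * acoef (m - k)) * t (k + 1)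
        + ∑ k ∈ Finset.range (m + 1), C (acoef k * acoef (m + 1 - k)) * t (k + 1))
        - C (2 * ((m:ℝ) + 1)) * ∑ k ∈ Finset.range (m + 1),
          C (acoef k * acoef (m - k)) * t (k + 1) := by
    rw [← Finset.sum_add_distrib, Finset.mul_sum, Finset.mul_sum, Finset.mul_sum,
      ← Finset.sum_sub_distrib]
    refine Finset.sum_congr rfl fun k hk => ?_
    obtain ⟨l, rfl⟩ := Nat.exists_eq_add_of_le (Nat.lt_succ_iff.mp (Finset.mem_range.mp hk))
    rw [show k + l + 1 - k = l + 1 by omega, show k + l - k = l by omega]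
    have hk := acoef_succ k
    have hl := acoef_succ l
    have hk' : acoef (k + 1) = (2 * k + 1) / (2 * k + 2) * acoef k := by
      field_simp; linear_combination hk
    have hl' : acoef (l + 1) = (2 * l + 1) / (2 * l + 2) * acoef l := by
      field_simp; linear_combination hl
    have e : 2 * (((k + l : ℕ):ℝ) + 2) * (acoef (k + 1) * acoef (l + 1))
        = (2 * ((k + l : ℕ):ℝ) + 3) * (acoef (k + 1) * acoef l + acoef k * acoef (l + 1))
          - 2 * (((k + l : ℕ):ℝ) + 1) * (acoef k * acoef l) := by
      rw [hk', hl']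
      push_cast
      field_simp
      ring
    have e' := congrArg (C : ℝ →+* ℝ[X]) e
    rw [C_sub, C_mul, C_mul (a := 2 * ((k + l : ℕ):ℝ) + 3), C_add (a := acoef (k + 1) * acoef l),
      C_mul (a := 2 * (((k + l : ℕ):ℝ) + 1))] at e'
    linear_combination t (k + 1) * e'
  have s4 : C (2 * ((m:ℝ) + 2)) * C (acoef (m + 2)) = C (2 * (m:ℝ) + 3) * C (acoef (m + 1)) := by
    rw [← C_mul, ← C_mul]
    congr 1
    have := acoef_succ (m + 1)
    push_cast at this
    linear_combination this
  rw [s1, s2]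
  linear_combination s3 + (t 0 + t (m + 2)) * s4

/-- The expansion `P_m(cos θ) = ∑ₖ aₖ a_{m-k} cos((m - 2k)θ)`. -/
lemma leg_eq_sum_T (m : ℕ) :
    leg m = ∑ k ∈ Finset.range (m + 1),
      C (acoef k * acoef (m - k)) * T ℝ ((m:ℤ) - 2 * k) := by
  have h1 : acoef 1 = 1 / 2 := by
    have h := acoef_succ 0
    simp [acoef_zero] at h
    linarith
  induction m using Nat.twoStepInduction with
  | zero => simp [leg_zero, acoef_zero]
  | one =>
    rw [leg_one, Finset.sum_range_succ, Finset.sum_range_one]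
    norm_num [acoef_zero, h1, T_neg_one, T_one]
    rw [← add_mul, ← C_add]
    norm_num
  | more m ih0 ih1 =>
    have h := expansion_rec m (fun k => T ℝ ((m:ℤ) + 2 - 2 * k))
    have e1 : ∑ k ∈ Finset.range (m + 2), C (acoef k * acoef (m + 1 - k)) *
        (T ℝ ((m:ℤ) + 2 - 2 * k) + T ℝ ((m:ℤ) + 2 - 2 * (k + 1 : ℕ))) = 2 * X * leg (m + 1) := by
      rw [ih1, Finset.mul_sum]
      refine Finset.sum_congr rfl fun k _ => ?_
      have := T_add_two ℝ ((m:ℤ) - 2 * k)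
      rw [show (m:ℤ) + 2 - 2 * k = (m:ℤ) - 2 * k + 2 by ring,
        show (m:ℤ) + 2 - 2 * (k + 1 : ℕ) = (m:ℤ) - 2 * k by push_cast; ring,
        show ((m + 1 : ℕ):ℤ) - 2 * k = (m:ℤ) - 2 * k + 1 by push_cast; ring]
      linear_combination C (acoef k * acoef (m + 1 - k)) * this
    have e0 : ∑ k ∈ Finset.range (m + 1), C (acoef k * acoef (m - k)) *
        T ℝ ((m:ℤ) + 2 - 2 * (k + 1 : ℕ)) = leg m := by
      rw [ih0]
      refine Finset.sum_congr rfl fun k _ => ?_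
      rw [show (m:ℤ) + 2 - 2 * (k + 1 : ℕ) = (m:ℤ) - 2 * k by push_cast; ring]
    simp only [e0, e1] at h
    have r := leg_rec m
    have hne : C (2 * ((m:ℝ) + 2)) ≠ 0 := by
      rw [Ne, C_eq_zero]; positivity
    apply mul_left_cancel₀ hne
    push_cast
    rw [h]
    simp [map_ofNat]
    linear_combination 2 * r

/-! ### The weak limit of `n P_n² dx` -/

lemma tendsto_recip : Tendsto (fun N : ℕ => 1 / (2 * (N:ℝ) + 1)) atTop (nhds 0) := by
  simp only [one_div]
  refine tendsto_inv_atTop_zero.comp ?_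
  exact tendsto_atTop_add_const_right _ _
    (tendsto_natCast_atTop_atTop.const_mul_atTop (by norm_num))

/-- Multiplying the weight by `x` averages the limits for the two neighbouring shifts, because
both coefficients in Bonnet's recurrence for `x P_N` tend to `1/2`. -/
lemma limit_X_mul (q : ℝ[X]) (l : ℤ → ℝ)
    (h : ∀ s : ℤ, Tendsto (fun n : ℕ => (n:ℝ) * J (q * leg n * leg ((n:ℤ) + s).toNat))
      atTop (nhds (l s))) (s : ℤ) :
    Tendsto (fun n : ℕ => (n:ℝ) * J (X * q * leg n * leg ((n:ℤ) + s).toNat))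
      atTop (nhds ((l (s + 1) + l (s - 1)) / 2)) := by
  have hN : Tendsto (fun n : ℕ => ((n:ℤ) + s).toNat) atTop atTop := by
    refine tendsto_atTop.mpr fun b => ?_
    filter_upwards [eventually_ge_atTop (b + s.natAbs)] with n hn
    omega
  have c1 := tendsto_recip.comp hN
  have h1 := ((c1.const_add 1).div_const 2).mul (h (s + 1))
  have h2 := ((c1.const_sub 1).div_const 2).mul (h (s - 1))
  have h3 := h1.add h2
  have e : (1 + 0) / 2 * l (s + 1) + (1 - 0) / 2 * l (s - 1) = (l (s + 1) + l (s - 1)) / 2 := by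
    ring
  rw [e] at h3
  refine h3.congr' ?_
  filter_upwards [eventually_ge_atTop (1 + s.natAbs)] with n hn
  obtain ⟨M, hM⟩ : ∃ M : ℕ, (n:ℤ) + s = M + 1 := ⟨((n:ℤ) + s - 1).toNat, by omega⟩
  have m0 : ((n:ℤ) + s).toNat = M + 1 := by omega
  have m1 : ((n:ℤ) + (s + 1)).toNat = M + 2 := by omega
  have m2 : ((n:ℤ) + (s - 1)).toNat = M := by omega
  simp only [Function.comp, m0, m1, m2]
  have a1 : C (2 * (M:ℝ) + 3) * (X * q * leg n * leg (M + 1))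
      = C ((M:ℝ) + 2) * (q * leg n * leg (M + 2)) + C ((M:ℝ) + 1) * (q * leg n * leg M) := by
    simp [map_ofNat]
    linear_combination - q * leg n * leg_rec M
  have b1 := congrArg J a1
  rw [map_add J, J_C_mul, J_C_mul, J_C_mul] at b1
  have h3 : (2 * (M:ℝ) + 3) ≠ 0 := by positivity
  rw [← eq_inv_mul_iff_mul_eq₀ h3] at b1
  rw [b1]
  push_cast
  rw [show 2 * ((M:ℝ) + 1) + 1 = 2 * M + 3 by ring]
  field_simp
  ring

/-- Asymptotically, `n P_n P_{n+s} dx` acts on `T_r` like `cos(sθ) dθ / π` on `[0, π]` with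
`x = cos θ`. For `n + s < 0` the index truncates to `0`, which does not affect the limit. -/
lemma limit_T (r : ℕ) : ∀ s : ℤ,
    Tendsto (fun n : ℕ => (n:ℝ) * J (T ℝ r * leg n * leg ((n:ℤ) + s).toNat))
      atTop (nhds (((if (r:ℤ) = s then 1 else 0) + (if (r:ℤ) = -s then 1 else 0)) / 2)) := by
  have base : ∀ s : ℤ,
      Tendsto (fun n : ℕ => (n:ℝ) * J (1 * leg n * leg ((n:ℤ) + s).toNat))
        atTop (nhds (if s = 0 then 1 else 0)) := by
    intro s
    split_ifs with hs
    · subst hs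
      have c1 := tendsto_recip.const_sub 1
      rw [sub_zero] at c1
      refine c1.congr fun n => ?_
      simp only [add_zero, Int.toNat_natCast, one_mul, J_leg_self]
      field_simp
      ring
    · refine tendsto_const_nhds.congr' ?_
      filter_upwards [eventually_ge_atTop (1 + s.natAbs)] with n hn
      rw [one_mul, J_leg_ne (by omega), mul_zero]
  induction r using Nat.twoStepInduction with
  | zero =>
    intro s
    simp only [Nat.cast_zero, T_zero]
    convert base s using 2
    split_ifs <;> first | omega | norm_num
  | one =>
    intro s
    have := limit_X_mul 1 _ base s
    simp only [Nat.cast_one, T_one]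
    rw [mul_one] at this
    convert this using 2
    congr 1
    rw [add_comm]
    congr 1 <;> exact if_congr (by omega) rfl rfl
  | more r ih0 ih1 =>
    intro s
    have := ((limit_X_mul _ _ ih1 s).const_mul 2).sub (ih0 s)
    push_cast at this ⊢
    refine Tendsto.congr (f₁ := fun n : ℕ => 2 * ((n:ℝ) * J (X * T ℝ (r + 1) * leg n *
      leg ((n:ℤ) + s).toNat)) - (n:ℝ) * J (T ℝ r * leg n * leg ((n:ℤ) + s).toNat)) ?_ ?_
    · intro n
      have e : T ℝ (r + 2) * leg n * leg ((n:ℤ) + s).toNat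
          = C 2 * (X * T ℝ (r + 1) * leg n * leg ((n:ℤ) + s).toNat)
            - T ℝ r * leg n * leg ((n:ℤ) + s).toNat := by
        rw [T_add_two, map_ofNat]
        ring
      rw [e, map_sub, J_C_mul]
      ring
    · convert this using 2
      have i1 : ((r:ℤ) + 1 = s + 1) = ((r:ℤ) = s) := propext (by omega)
      have i2 : ((r:ℤ) + 1 = -(s - 1)) = ((r:ℤ) = -s) := propext (by omega)
      have i3 : ((r:ℤ) + 1 = -(s + 1)) = ((r:ℤ) + 2 = -s) := propext (by omega)
      have i4 : ((r:ℤ) + 1 = s - 1) = ((r:ℤ) + 2 = s) := propext (by omega)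
      simp only [i1, i2, i3, i4]
      ring

lemma limit_T_int (r : ℤ) :
    Tendsto (fun n : ℕ => (n:ℝ) * J (T ℝ r * leg n * leg n))
      atTop (nhds (if r = 0 then 1 else 0)) := by
  have := limit_T r.natAbs 0
  simp only [T_natAbs, add_zero, Int.toNat_natCast] at this
  convert this using 2
  split_ifs <;> first | omega | norm_num

lemma limit_T_mul_T (a b : ℤ) :
    Tendsto (fun n : ℕ => (n:ℝ) * J (T ℝ a * T ℝ b * leg n * leg n))
      atTop (nhds (((if a + b = 0 then 1 else 0) + (if a - b = 0 then 1 else 0)) / 2)) := by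
  have := ((limit_T_int (a + b)).add (limit_T_int (a - b))).div_const 2
  refine this.congr fun n => ?_
  have e : C 2 * (T ℝ a * T ℝ b * leg n * leg n)
      = T ℝ (a + b) * leg n * leg n + T ℝ (a - b) * leg n * leg n := by
    rw [map_ofNat]
    linear_combination leg n * leg n * T_mul_T ℝ a b
  have e' := congrArg J e
  rw [J_C_mul, map_add J] at e'
  linear_combination (-(n:ℝ) / 2) * e'

lemma legP_eq (m n : ℕ) : legP m n
    = ∑ k ∈ Finset.range (m + 1), ∑ j ∈ Finset.range (m + 1),
      (acoef k * acoef (m - k)) * (acoef j * acoef (m - j)) *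
        J (T ℝ ((m:ℤ) - 2 * k) * T ℝ ((m:ℤ) - 2 * j) * leg n * leg n) := by
  have h : legP m n = J (leg m * leg m * (leg n * leg n)) := by
    rw [legP, J_apply]
    simp only [legendreP_eq, eval_mul, pow_two]
  rw [h, leg_eq_sum_T m, Finset.sum_mul_sum, Finset.sum_mul, map_sum J]
  refine Finset.sum_congr rfl fun k _ => ?_
  rw [Finset.sum_mul, map_sum J]
  refine Finset.sum_congr rfl fun j _ => ?_
  rw [← J_C_mul, C_mul (a := acoef k * acoef (m - k))]
  refine congrArg J ?_
  ring

/-- Since the limiting functional kills `T_r` for `r ≠ 0`, only the diagonal terms of the expanded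
`P_m²` contribute to the limit. -/
lemma legP_limit (m : ℕ) : Tendsto (fun n : ℕ => (n:ℝ) * legP m n) atTop (nhds (cc m)) := by
  have h : Tendsto (fun n : ℕ => ∑ k ∈ Finset.range (m + 1), ∑ j ∈ Finset.range (m + 1),
      (acoef k * acoef (m - k)) * (acoef j * acoef (m - j)) *
        ((n:ℝ) * J (T ℝ ((m:ℤ) - 2 * k) * T ℝ ((m:ℤ) - 2 * j) * leg n * leg n))) atTop
      (nhds (∑ k ∈ Finset.range (m + 1), ∑ j ∈ Finset.range (m + 1),
      (acoef k * acoef (m - k)) * (acoef j * acoef (m - j)) *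
        (((if ((m:ℤ) - 2 * k) + ((m:ℤ) - 2 * j) = 0 then 1 else 0)
          + (if ((m:ℤ) - 2 * k) - ((m:ℤ) - 2 * j) = 0 then 1 else 0)) / 2))) :=
    tendsto_finsetSum _ fun k _ => tendsto_finsetSum _ fun j _ =>
      (limit_T_mul_T _ _).const_mul _
  have e : (∑ k ∈ Finset.range (m + 1), ∑ j ∈ Finset.range (m + 1),
      (acoef k * acoef (m - k)) * (acoef j * acoef (m - j)) *
        (((if ((m:ℤ) - 2 * k) + ((m:ℤ) - 2 * j) = 0 then 1 else 0)
          + (if ((m:ℤ) - 2 * k) - ((m:ℤ) - 2 * j) = 0 then (1:ℝ) else 0)) / 2)) = cc m := by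
    rw [cc]
    refine Finset.sum_congr rfl fun k hk => ?_
    have hk' : k ≤ m := Nat.lt_succ_iff.mp (Finset.mem_range.mp hk)
    have hmk : m - k ∈ Finset.range (m + 1) := Finset.mem_range.mpr (by omega)
    -- The pairs surviving in the limit are `j = m - k` and `j = k`.
    have i1 : ∀ j : ℕ, (((m:ℤ) - 2 * k) + ((m:ℤ) - 2 * j) = 0) = (j = m - k) :=
      fun j => propext (by omega)
    have i2 : ∀ j : ℕ, (((m:ℤ) - 2 * k) - ((m:ℤ) - 2 * j) = 0) = (j = k) :=
      fun j => propext (by omega)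
    simp only [i1, i2, add_div, mul_add, Finset.sum_add_distrib, ite_div, mul_ite, zero_div,
      mul_zero, Finset.sum_ite_eq', hk, hmk, if_true]
    rw [Nat.sub_sub_self hk']
    ring
  rw [e] at h
  refine h.congr fun n => ?_
  rw [legP_eq, Finset.mul_sum]
  refine Finset.sum_congr rfl fun k _ => ?_
  rw [Finset.mul_sum]
  refine Finset.sum_congr rfl fun j _ => ?_
  ring

/-- The limits `c(m) = lim_{n→∞} n·P(m,n)` exist, with `c(0)=1`, `c(1)=1/2`,
`c(2)=11/32`, `c(3)=17/64`, and for `m ≥ 1`,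
`0 ≤ c(m+1) < c(m) ≤ 1/2` and `c(m+1) ≤ 15/(16(m+2)) + 1/32`. -/
theorem legP_limit_c :
    ∃ c : ℕ → ℝ,
      (∀ m : ℕ, Tendsto (fun n : ℕ => (n:ℝ) * legP m n) atTop (nhds (c m))) ∧
      c 0 = 1 ∧ c 1 = 1/2 ∧ c 2 = 11/32 ∧ c 3 = 17/64 ∧
      ∀ m : ℕ, 1 ≤ m →
        0 ≤ c (m+1) ∧ c (m+1) < c m ∧ c m ≤ 1/2 ∧
        c (m+1) ≤ 15/(16*((m:ℝ)+2)) + 1/32 := by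
  refine ⟨cc, legP_limit, cc_zero, cc_one, cc_two, cc_three, fun m hm => ?_⟩
  refine ⟨(cc_pos _).le, cc_lt m, ?_, ?_⟩
  · rw [← cc_one]
    exact (strictAnti_nat_of_succ_lt cc_lt).antitone hm
  · obtain ⟨n, rfl⟩ := Nat.exists_eq_add_of_le' hm
    have := cc_bound n
    push_cast
    rw [show (n:ℝ) + 1 + 2 = n + 3 by ring]
    exact this
end
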